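/- Let p be an odd prime and s a positive integer with p^s ≡ 2 (mod 3), and let m = (2p^s - 1)/3 or m = p^s - 1. Then, modulo p^{s+5}, sum_{k=0}^{m} (6k+1) (1/3)_k^6 / (k!)^6 ≡ 10 p^s * ((2/3)_{(2p^s-1)/3}^3 / (1)_{(2p^s-1)/3}^3). -/

import Mathlib

open Finset

/-- Rising factorial `(x)_k = x(x+1)⋯(x+k-1)`. -/
def poch (x : ℚ) (k : ℕ) : ℚ := ∏ i ∈ Finset.range k, (x + i)

/-- `a ≡ b (mod p^m)`: the `p`-adic valuation of `a - b` is at least `m`. -/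
def pcong (p : ℕ) (m : ℕ) (a b : ℚ) : Prop :=
  a = b ∨ (m : ℤ) ≤ padicValRat p (a - b)

/-- Generalized harmonic number `H_m^{(ℓ)} = ∑_{k=1}^m 1/k^ℓ`. -/
def harm (m ℓ : ℕ) : ℚ := ∑ k ∈ Finset.Icc 1 m, 1 / (k : ℚ) ^ ℓ

/-! Write `P_k = (1/3)_k / k!`. The hypotheses force `p ≥ 5`, `p ≡ 2 (mod 3)` and `s` odd.

For `s ≥ 3` both sides vanish modulo `p ^ (s + 5)`. On the left, expanding `P_k ^ 3` by Dougall's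
`₇F₆` sum, exchanging the two summations and telescoping the sum over `k` turns the sum over `k < N`
into `54 N ^ 3 P_N ^ 3 / (3 N - 1)` times a sum over `j < N`. For `N = p ^ s` and `N = M + 1`, where
`3 M + 1 = 2 p ^ s`, the factor `N P_N` is divisible by `p ^ s`, so the prefactor is divisible by
`p ^ (3 s)`, while `p` enters the denominators of the new sum to the power at most `2 s - 5`.

For `s = 1` the upper parameters `1/3` are deformed to `1/3 - b y` with `b = 10, 2, 3, 4, 5, 6`.
Modulo `p ^ 6` the deformed sum is a polynomial in `y ∈ p ℤ_(p)`. At `y = 2 p / (3 v)` with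
`v = 2, 3, 4, 5, 6` the series terminates and Dougall's sum evaluates it; at `v = 10` it vanishes
under the reflection `k ↦ M - k`. Six dilations of one point of `p ℤ_(p)` determine the value at `0`
modulo `p ^ 6`, which gives the congruence for `p ≥ 11`; the case `p = 5` is a computation.
-/

theorem poch_zero (x : ℚ) : poch x 0 = 1 := rfl

theorem poch_succ (x : ℚ) (k : ℕ) : poch x (k + 1) = poch x k * (x + k) :=
  prod_range_succ _ _

theorem poch_succ' (x : ℚ) (k : ℕ) : poch x (k + 1) = x * poch (x + 1) k := by
  rw [poch, prod_range_succ', Nat.cast_zero, add_zero, mul_comm]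
  simp only [poch, Nat.cast_add_one, add_assoc, add_comm (1 : ℚ)]

theorem poch_ne_zero {x : ℚ} {k : ℕ} (h : ∀ i < k, x + i ≠ 0) : poch x k ≠ 0 :=
  prod_ne_zero_iff.2 fun i hi => h i (mem_range.1 hi)

theorem poch_neg_natCast_eq_zero {n k : ℕ} (h : n < k) : poch (-n) k = 0 :=
  prod_eq_zero (mem_range.2 h) (neg_add_cancel _)

theorem poch_one (k : ℕ) : poch 1 k = k.factorial := by
  induction k with
  | zero => simp [poch_zero]
  | succ k ih => rw [poch_succ, ih, Nat.factorial_succ]; push_cast; ring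

theorem poch_reflect (x : ℚ) (k : ℕ) : poch (1 - x - k) k = (-1) ^ k * poch x k := by
  calc poch (1 - x - k) k = ∏ i ∈ range k, (1 - x - k + ((k - 1 - i : ℕ) : ℚ)) :=
        (prod_range_reflect (fun i : ℕ => 1 - x - k + (i : ℚ)) k).symm
    _ = ∏ i ∈ range k, -1 * (x + i) := prod_congr rfl fun i hi => by
        rw [Nat.sub_sub, Nat.cast_sub (by have := mem_range.1 hi; omega)]
        push_cast
        ring
    _ = (-1) ^ k * poch x k := by simp only [prod_mul_distrib, prod_const, card_range, poch]

/-- The coefficient `(x)_k / k!` of the binomial series. -/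
def pochDiv (x : ℚ) (k : ℕ) : ℚ := poch x k / k.factorial

/-- The ratio `(b)_k / (1 + a - b)_k` of two paired parameters of a well-poised hypergeometric
series with leading parameter `a`. -/
def wpRatio (a b : ℚ) (k : ℕ) : ℚ := poch b k / poch (1 + a - b) k

/-- The partial sum `∑_{k < n} (a + 2k) (a)_k / k! ∏_{b ∈ B} (b)_k / (1 + a - b)_k` of the
very-well-poised series with leading parameter `a` and further parameters `B`, normalised so that
the term `k = 0` is `a`. -/
def veryWellPoisedSum (a : ℚ) (B : Multiset ℚ) (n : ℕ) : ℚ :=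
  ∑ k ∈ range n, (a + 2 * k) * ((a ::ₘ B).map (wpRatio a · k)).prod

theorem wpRatio_zero (a b : ℚ) : wpRatio a b 0 = 1 := by simp [wpRatio, poch_zero]

theorem wpRatio_succ (a b : ℚ) (k : ℕ) :
    wpRatio a b (k + 1) = wpRatio a b k * ((b + k) / (1 + a - b + k)) := by
  rw [wpRatio, poch_succ, poch_succ, mul_div_mul_comm, wpRatio]

theorem wpRatio_self (a : ℚ) (k : ℕ) : wpRatio a a k = pochDiv a k := by
  rw [wpRatio, add_sub_cancel_right, poch_one, pochDiv]

theorem wpRatio_add_one_mul {a b : ℚ} {k : ℕ} (h : ∀ i ≤ k, a - b + i ≠ 0) :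
    wpRatio a (b + 1) k * (b * (a - b)) = wpRatio a b k * ((b + k) * (a - b + k)) := by
  have hnum : poch (b + 1) k * b = poch b k * (b + k) := by
    rw [mul_comm, ← poch_succ', poch_succ]
  have hden : poch (1 + a - b) k * (a - b) = poch (a - b) k * (a - b + k) := by
    rw [show 1 + a - b = a - b + 1 by ring, mul_comm, ← poch_succ', poch_succ]
  have h₀ : poch (a - b) k ≠ 0 := poch_ne_zero fun i hi => h i hi.le
  have h₁ : poch (1 + a - b) k ≠ 0 := by
    intro h0
    rw [h0, zero_mul] at hden
    exact mul_ne_zero h₀ (h k le_rfl) hden.symm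
  rw [wpRatio, wpRatio, show 1 + a - (b + 1) = a - b by ring, div_mul_eq_mul_div,
    div_mul_eq_mul_div, div_eq_div_iff h₀ h₁]
  linear_combination poch (1 + a - b) k * (a - b) * hnum + poch b k * (b + k) * hden

theorem prod_wpRatio_succ_mul (a : ℚ) (A : Multiset ℚ) {k : ℕ}
    (h : ∀ b ∈ A, 1 + a - b + k ≠ 0) :
    (A.map (wpRatio a · (k + 1))).prod * (A.map (1 + a - · + (k : ℚ))).prod =
      (A.map (wpRatio a · k)).prod * (A.map (· + (k : ℚ))).prod := by
  rw [← Multiset.prod_map_mul, ← Multiset.prod_map_mul]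
  refine congrArg _ (Multiset.map_congr rfl fun b hb => ?_)
  rw [wpRatio_succ, mul_assoc, div_mul_cancel₀ _ (h b hb)]

theorem sum_prod_wpRatio_mul_sub {a : ℚ} {A : Multiset ℚ} (ha : a ∈ A) {n : ℕ}
    (h : ∀ b ∈ A, ∀ k < n, 1 + a - b + k ≠ 0) :
    ∑ k ∈ range (n + 1), (A.map (wpRatio a · k)).prod *
        ((A.map (· + (k : ℚ))).prod - (A.map (a - · + (k : ℚ))).prod) =
      (A.map (wpRatio a · n)).prod * (A.map (· + (n : ℚ))).prod := by
  induction n with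
  | zero =>
    have : (A.map (a - · + ((0 : ℕ) : ℚ))).prod = 0 :=
      Multiset.prod_eq_zero (Multiset.mem_map.2 ⟨a, ha, by simp⟩)
    rw [zero_add, sum_range_one, this, sub_zero]
  | succ n ih =>
    have hstep := prod_wpRatio_succ_mul a A fun b hb => h b hb n n.lt_succ_self
    have hshift : (A.map (a - · + ((n + 1 : ℕ) : ℚ))).prod =
        (A.map (1 + a - · + (n : ℚ))).prod :=
      congrArg _ (Multiset.map_congr rfl fun b _ => by push_cast; ring)
    rw [sum_range_succ, ih fun b hb k hk => h b hb k (hk.trans n.lt_succ_self), mul_sub, hshift,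
      hstep, add_sub_cancel]

theorem veryWellPoisedSum_contiguous {a b c d e g : ℚ} {n : ℕ} (hsum : b + c + d + e + g = 2 * a)
    (hg : g = -n) (he0 : e ≠ 0) (hg0 : g ≠ 0)
    (hb : ∀ k < n, 1 + a - b + k ≠ 0) (hc : ∀ k < n, 1 + a - c + k ≠ 0)
    (hd : ∀ k < n, 1 + a - d + k ≠ 0) (he : ∀ k ≤ n, a - e + k ≠ 0)
    (hgk : ∀ k ≤ n, a - g + k ≠ 0) :
    (a - e) * ((a - b - g) * (a - c - g) * (a - d - g)) *
        veryWellPoisedSum a {b, c, d, e + 1, g} (n + 1) =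
      (a - g) * ((a - b - e) * (a - c - e) * (a - d - e)) *
        veryWellPoisedSum a {b, c, d, e, g + 1} (n + 1) := by
  have hshift {x : ℚ} (hx : ∀ k ≤ n, a - x + k ≠ 0) : ∀ k < n, 1 + a - x + k ≠ 0 := fun k hk => by
    have := hx (k + 1) hk
    push_cast at this
    rwa [show 1 + a - x + k = a - x + (k + 1) by ring]
  have htel := sum_prod_wpRatio_mul_sub (a := a) (A := {a, b, c, d, e, g}) (n := n) (by simp)
    (by
      simp only [Multiset.insert_eq_cons, Multiset.mem_cons, Multiset.mem_singleton]
      rintro x (rfl | rfl | rfl | rfl | rfl | rfl)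
      exacts [fun k _ => by rw [add_sub_cancel_right]; positivity, hb, hc, hd, hshift he,
        hshift hgk])
  have hlast : (({a, b, c, d, e, g} : Multiset ℚ).map (· + (n : ℚ))).prod = 0 :=
    Multiset.prod_eq_zero (Multiset.mem_map.2 ⟨g, by simp, by rw [hg, neg_add_cancel]⟩)
  rw [hlast, mul_zero] at htel
  refine mul_left_cancel₀ (mul_ne_zero he0 hg0) (sub_eq_zero.1 (Eq.trans ?_
    ((congrArg ((e - g) * ·) htel).trans (mul_zero _))))
  simp only [veryWellPoisedSum, mul_sum, ← sum_sub_distrib]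
  refine sum_congr rfl fun k hk => ?_
  have hk : k ≤ n := Nat.lt_succ_iff.1 (mem_range.1 hk)
  have hce := wpRatio_add_one_mul fun i hi => he i (hi.trans hk)
  have hcg := wpRatio_add_one_mul fun i hi => hgk i (hi.trans hk)
  obtain rfl : e = 2 * a - b - c - d - g := by linarith
  simp only [Multiset.insert_eq_cons, Multiset.map_cons, Multiset.map_singleton,
    Multiset.prod_cons, Multiset.prod_singleton]
  set w := (a + 2 * k) * (wpRatio a a k * (wpRatio a b k * (wpRatio a c k * wpRatio a d k)))
  linear_combination
    w * (g * ((a - b - g) * (a - c - g) * (a - d - g))) * wpRatio a g k * hce -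
    w * ((2 * a - b - c - d - g) * ((c + d + g - a) * (b + d + g - a) * (b + c + g - a))) *
      wpRatio a (2 * a - b - c - d - g) k * hcg

theorem veryWellPoisedSum_succ_of_neg_natCast_mem {a : ℚ} {B : Multiset ℚ} {m n : ℕ}
    (hB : -(m : ℚ) ∈ B) (h : m < n) :
    veryWellPoisedSum a B (n + 1) = veryWellPoisedSum a B n := by
  rw [veryWellPoisedSum, sum_range_succ, ← veryWellPoisedSum, add_eq_left]
  refine mul_eq_zero_of_right _ (Multiset.prod_eq_zero
    (Multiset.mem_map.2 ⟨-(m : ℚ), Multiset.mem_cons_of_mem hB, ?_⟩))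
  rw [wpRatio, poch_neg_natCast_eq_zero h, zero_div]

-- Dougall's `₇F₆` sum. In the induction on `m` the contiguous relation, applied with
-- `g = -(m + 1)`, trades the parameters `e, -(m + 1)` for `e - 1, -m`.
theorem veryWellPoisedSum_dougall {a b c d : ℚ} (m : ℕ) {e : ℚ}
    (hsum : b + c + d + e = 1 + 2 * a + m)
    (hb : ∀ k < m, 1 + a - b + k ≠ 0) (hc : ∀ k < m, 1 + a - c + k ≠ 0)
    (hd : ∀ k < m, 1 + a - d + k ≠ 0) (he : ∀ k ≤ m, 1 + a - e + k ≠ 0)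
    (ha : ∀ k < 2 * m, 1 + a + k ≠ 0) (he' : ∀ k < m, e - 1 - k ≠ 0) :
    veryWellPoisedSum a {b, c, d, e, -(m : ℚ)} (m + 1) =
      (a + m) * poch (1 - a - m) m *
          (poch (1 + a - b - c) m * poch (1 + a - b - d) m * poch (1 + a - c - d) m) /
        (poch (1 + a - b) m * poch (1 + a - c) m * poch (1 + a - d) m * poch (1 + a - e) m) := by
  induction m generalizing e with
  | zero => simp [veryWellPoisedSum, wpRatio_zero, poch_zero]
  | succ m ih =>
    push_cast at hsum ⊢
    have heq (k : ℕ) : 1 + a - (e - 1) + k = 1 + a - e + (k + 1 : ℕ) := by push_cast; ring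
    have hih := ih (e := e - 1) (by linarith) (fun k hk => hb k (by omega))
      (fun k hk => hc k (by omega)) (fun k hk => hd k (by omega))
      (fun k hk => heq k ▸ he (k + 1) (by omega)) (fun k hk => ha k (by omega))
      fun k hk h => he' (k + 1) (by omega) (by push_cast; linarith)
    have hcont := veryWellPoisedSum_contiguous (a := a) (b := b) (c := c) (d := d) (e := e - 1)
      (g := -(m + 1)) (n := m + 1) (by linarith) (by push_cast; ring)
      (fun h => he' 0 (by omega) (by simpa using h)) (by rw [neg_ne_zero]; positivity) hb hc hd
      (fun k hk h => he k hk (by linarith))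
      fun k hk h => ha (m + k) (by omega) (by push_cast; linarith)
    rw [sub_add_cancel, show -((m : ℚ) + 1) + 1 = -m by ring,
      veryWellPoisedSum_succ_of_neg_natCast_mem (B := {b, c, d, e - 1, -(m : ℚ)}) (by simp)
        m.lt_succ_self, hih] at hcont
    have he0 : 1 + a - e ≠ 0 := by simpa using he 0 (by omega)
    obtain ⟨hb0, hb1⟩ := mul_ne_zero_iff.1 (poch_succ _ m ▸ poch_ne_zero hb)
    obtain ⟨hc0, hc1⟩ := mul_ne_zero_iff.1 (poch_succ _ m ▸ poch_ne_zero hc)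
    obtain ⟨hd0, hd1⟩ := mul_ne_zero_iff.1 (poch_succ _ m ▸ poch_ne_zero hd)
    have he1 : poch (1 + a - e + 1) m ≠ 0 := poch_ne_zero fun k hk => by
      rw [add_assoc, add_comm 1 (k : ℚ)]; exact_mod_cast he (k + 1) (by omega)
    rw [show 1 + a - (e - 1) = 1 + a - e + 1 by ring] at hcont
    rw [poch_succ' (1 - a - (m + 1)), poch_succ' (1 + a - e),
      show 1 - a - ((m : ℚ) + 1) + 1 = 1 - a - m by ring]
    simp only [poch_succ]
    rw [eq_div_iff (by positivity)]
    rw [mul_div_assoc', eq_div_iff (by positivity)] at hcont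
    obtain rfl : e = 2 + 2 * a + m - b - c - d := by linarith
    linear_combination hcont

theorem poch_add (x : ℚ) (m n : ℕ) : poch x (m + n) = poch x m * poch (x + m) n := by
  simp only [poch, prod_range_add, Nat.cast_add, add_assoc]

theorem poch_sub_mul_poch (x : ℚ) {k n : ℕ} (hk : k ≤ n) :
    poch x (n - k) * poch (1 - n - x) k = (-1) ^ k * poch x n := by
  have h := poch_reflect (1 - n - x) k
  rw [show 1 - (1 - n - x) - k = x + ((n - k : ℕ) : ℚ) by push_cast [hk]; ring] at h
  have h' := poch_add x (n - k) k
  rw [Nat.sub_add_cancel hk, h] at h'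
  rw [h', mul_left_comm, ← mul_assoc ((-1) ^ k), ← mul_pow]
  norm_num

theorem wpRatio_neg_sub {n k : ℕ} {b : ℚ} (hk : k ≤ n) (h : ∀ i < n, 1 + -(n : ℚ) - b + i ≠ 0) :
    wpRatio (-n) b (n - k) = (-1) ^ n * wpRatio (-n) b k := by
  rw [← sub_eq_add_neg] at h
  have h₁ : poch (1 - n - b) (n - k) ≠ 0 := poch_ne_zero fun i hi => h i (by omega)
  have h₂ : poch (1 - n - b) k ≠ 0 := poch_ne_zero fun i hi => h i (by omega)
  have hleft := poch_sub_mul_poch b hk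
  have hright := poch_sub_mul_poch (1 - n - b) hk
  have hfull := poch_reflect (1 - n - b) n
  rw [sub_sub_cancel] at hright
  rw [show 1 - (1 - n - b) - n = b by ring] at hfull
  rw [wpRatio, wpRatio, ← sub_eq_add_neg, mul_div_assoc', div_eq_div_iff h₁ h₂, hleft, mul_assoc,
    mul_comm (poch b k), hright, hfull]
  ring

theorem veryWellPoisedSum_neg_natCast {n : ℕ} {B : Multiset ℚ} (hcard : Odd B.card)
    (h : ∀ b ∈ B, ∀ i < n, 1 + -(n : ℚ) - b + i ≠ 0) :
    veryWellPoisedSum (-n) B (n + 1) = 0 := by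
  have hrefl : veryWellPoisedSum (-n) B (n + 1) = -veryWellPoisedSum (-n) B (n + 1) := by
    conv_lhs => rw [veryWellPoisedSum, ← sum_range_reflect]
    rw [veryWellPoisedSum, ← sum_neg_distrib]
    refine sum_congr rfl fun k hk => ?_
    have hk : k ≤ n := Nat.lt_succ_iff.1 (mem_range.1 hk)
    have hprod : (((-n : ℚ) ::ₘ B).map (wpRatio (-n) · (n - k))).prod =
        (((-n : ℚ) ::ₘ B).map ((-1) ^ n * wpRatio (-n) · k)).prod := by
      refine congrArg _ (Multiset.map_congr rfl fun b hb => wpRatio_neg_sub hk ?_)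
      rcases Multiset.mem_cons.1 hb with rfl | hb
      · intro i _
        rw [add_sub_cancel_right]
        positivity
      · exact h b hb
    rw [Nat.add_sub_cancel, hprod, Multiset.prod_map_mul, Multiset.map_const',
      Multiset.prod_replicate, Multiset.card_cons, pow_right_comm, hcard.add_one.neg_one_pow,
      one_pow, one_mul]
    push_cast [hk]
    ring
  linarith

theorem pochDiv_zero (x : ℚ) : pochDiv x 0 = 1 := by simp [pochDiv, poch_zero]

theorem pochDiv_succ_mul (x : ℚ) (k : ℕ) : pochDiv x (k + 1) * (k + 1) = pochDiv x k * (x + k) := by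
  rw [pochDiv, pochDiv, poch_succ, Nat.factorial_succ]
  push_cast
  field_simp

theorem mul_three_add_ne_zero {c : ℤ} (hc : c % 3 ≠ 0) (i : ℤ) : (i * 3 + c : ℚ) ≠ 0 := by
  have : i * 3 + c ≠ 0 := by omega
  exact_mod_cast this

theorem sum_wpRatio_eq_pochDiv_pow_three (k : ℕ) :
    ∑ j ∈ range (k + 1), (3 * j + 1) * pochDiv (2 / 3) j ^ 4 *
        (wpRatio (2 / 3) (1 / 3 + k) j * wpRatio (2 / 3) (-k) j) =
      -((3 * k - 1) * (3 * k + 2)) / 2 * pochDiv (1 / 3) k ^ 3 := by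
  have hdougall := veryWellPoisedSum_dougall (a := 2 / 3) (b := 2 / 3) (c := 2 / 3) (d := 2 / 3) k
    (e := 1 / 3 + k) (by ring) (fun i _ => by ring_nf; positivity)
    (fun i _ => by ring_nf; positivity) (fun i _ => by ring_nf; positivity)
    (fun i _ h => mul_three_add_ne_zero (c := 4) (by decide) (i - k) (by push_cast; linarith))
    (fun i _ => by positivity)
    (fun i _ h => mul_three_add_ne_zero (c := 1) (by decide) (k - i - 1) (by push_cast; linarith))
  have hden : poch (4 / 3 - k) k ≠ 0 := poch_ne_zero fun i _ h =>
    mul_three_add_ne_zero (c := 4) (by decide) (i - k) (by push_cast; linarith)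
  have htelescope : poch (1 / 3 - k) k = (1 - 3 * k) * poch (4 / 3 - k) k := by
    have h := poch_succ (1 / 3 - k) k
    rw [poch_succ', show (1 : ℚ) / 3 - k + 1 = 4 / 3 - k by ring] at h
    linear_combination -3 * h
  rw [show (1 : ℚ) + 2 / 3 - 2 / 3 - 2 / 3 = 1 / 3 by ring,
    show (1 : ℚ) + 2 / 3 - 2 / 3 = 1 by ring,
    show (1 : ℚ) - 2 / 3 - k = 1 / 3 - k by ring,
    show (1 : ℚ) + 2 / 3 - (1 / 3 + k) = 4 / 3 - k by ring, htelescope, poch_one] at hdougall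
  calc _ = 3 / 2 * veryWellPoisedSum (2 / 3) {2 / 3, 2 / 3, 2 / 3, 1 / 3 + ↑k, -↑k} (k + 1) := by
        rw [veryWellPoisedSum, mul_sum]
        refine sum_congr rfl fun j _ => ?_
        simp only [Multiset.insert_eq_cons, Multiset.map_cons, Multiset.map_singleton,
          Multiset.prod_cons, Multiset.prod_singleton, wpRatio_self]
        ring
    _ = _ := by
        rw [hdougall, pochDiv]
        generalize poch (4 / 3 - ↑k) k = D at hden
        field_simp
        ring

theorem sum_pochDiv_pow_three_mul_wpRatio (j N : ℕ) :
    ∑ k ∈ range N, (6 * k + 1) * pochDiv (1 / 3) k ^ 3 * (-2 / ((3 * k - 1) * (3 * k + 2))) *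
        (wpRatio (2 / 3) (1 / 3 + k) j * wpRatio (2 / 3) (-k) j) =
      54 * N ^ 3 / (3 * N - 1) * pochDiv (1 / 3) N ^ 3 *
        (wpRatio (2 / 3) (1 / 3 + N) j * wpRatio (2 / 3) (1 - N) j) / (3 * j + 1) ^ 2 := by
  induction N with
  | zero => simp
  | succ N ih =>
    have hpred : (N * 3 - 1 : ℚ) ≠ 0 := by
      exact_mod_cast mul_three_add_ne_zero (c := -1) (by decide) N
    have hup := wpRatio_add_one_mul (a := 2 / 3) (b := 1 / 3 + N) (k := j) fun i _ h =>
      mul_three_add_ne_zero (c := 1) (by decide) (i - N) (by push_cast; linarith)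
    have hdown := wpRatio_add_one_mul (a := 2 / 3) (b := -N) (k := j) fun i _ => by
      rw [sub_neg_eq_add]; positivity
    have hP := pochDiv_succ_mul (1 / 3) N
    rw [neg_add_eq_sub] at hdown
    rw [sum_range_succ, ih]
    push_cast
    rw [show (1 : ℚ) / 3 + (N + 1) = 1 / 3 + N + 1 by ring, show (1 : ℚ) - (N + 1) = -N by ring]
    rw [show (3 : ℚ) * (N + 1) - 1 = 3 * N + 2 by ring]
    have hcube : (N + 1) ^ 3 * pochDiv (1 / 3) (N + 1) ^ 3 =
        pochDiv (1 / 3) N ^ 3 * (1 / 3 + N) ^ 3 := by rw [← mul_pow, ← mul_pow, ← hP, mul_comm]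
    generalize wpRatio (2 / 3) (1 / 3 + N) j = A at *
    generalize wpRatio (2 / 3) (1 / 3 + N + 1) j = A' at *
    generalize wpRatio (2 / 3) (-N) j = B at *
    generalize wpRatio (2 / 3) (1 - N) j = B' at *
    generalize pochDiv (1 / 3) (N + 1) = P' at *
    generalize pochDiv (1 / 3) N = P at *
    field_simp
    linear_combination (-54 : ℚ) * A' * B * (3 * N - 1) * hcube +
      162 * P ^ 3 * B * (1 / 3 + N) ^ 2 * hup - 162 * P ^ 3 * N ^ 2 * A * hdown

theorem sum_pochDiv_pow_six (N : ℕ) :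
    ∑ k ∈ range N, (6 * k + 1) * pochDiv (1 / 3) k ^ 6 =
      54 * N ^ 3 / (3 * N - 1) * pochDiv (1 / 3) N ^ 3 *
        ∑ j ∈ range N, pochDiv (2 / 3) j ^ 4 *
          (wpRatio (2 / 3) (1 / 3 + N) j * wpRatio (2 / 3) (1 - N) j) / (3 * j + 1) := by
  have hterm (k) (hk : k ∈ range N) : (6 * k + 1) * pochDiv (1 / 3) k ^ 6 =
      ∑ j ∈ range N, (3 * j + 1) * pochDiv (2 / 3) j ^ 4 *
        ((6 * k + 1) * pochDiv (1 / 3) k ^ 3 * (-2 / ((3 * k - 1) * (3 * k + 2))) *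
        (wpRatio (2 / 3) (1 / 3 + k) j * wpRatio (2 / 3) (-k) j)) := by
    have hpred : (k * 3 - 1 : ℚ) ≠ 0 := by
      exact_mod_cast mul_three_add_ne_zero (c := -1) (by decide) k
    have hext : ∑ j ∈ range N, (3 * j + 1) * pochDiv (2 / 3) j ^ 4 *
        (wpRatio (2 / 3) (1 / 3 + k) j * wpRatio (2 / 3) (-k) j) =
        -((3 * k - 1) * (3 * k + 2)) / 2 * pochDiv (1 / 3) k ^ 3 := by
      rw [← sum_wpRatio_eq_pochDiv_pow_three]
      refine (sum_subset (range_subset_range.2 (mem_range.1 hk)) fun j _ hj => ?_).symm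
      rw [wpRatio.eq_def _ (-(k : ℚ)), poch_neg_natCast_eq_zero (by simpa using hj), zero_div,
        mul_zero, mul_zero]
    calc _ = (6 * k + 1) * pochDiv (1 / 3) k ^ 3 * (-2 / ((3 * k - 1) * (3 * k + 2))) *
          (-((3 * k - 1) * (3 * k + 2)) / 2 * pochDiv (1 / 3) k ^ 3) := by field_simp
      _ = _ := by
          rw [← hext, mul_sum]
          exact sum_congr rfl fun j _ => by ring
  rw [sum_congr rfl hterm, sum_comm, mul_sum]
  refine sum_congr rfl fun j _ => ?_
  rw [← mul_sum, sum_pochDiv_pow_three_mul_wpRatio]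
  field_simp

section Padic

variable {p : ℕ} [hp : Fact p.Prime]

/-- The rational numbers of `p`-adic valuation at least `e`, including `0`: the additive subgroup
`p ^ e ℤ_(p)` of `ℚ`. -/
def padicBall (p : ℕ) [Fact p.Prime] (e : ℤ) : AddSubgroup ℚ where
  carrier := {x | padicNorm p x ≤ (p : ℚ) ^ (-e)}
  zero_mem' := by simp only [Set.mem_ofPred_eq, padicNorm.zero]; positivity
  add_mem' hx hy := padicNorm.nonarchimedean.trans (max_le hx hy)
  neg_mem' {x} hx := by simpa only [Set.mem_ofPred_eq, padicNorm.neg] using hx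

/-- The ring `ℤ_(p)` of rational numbers that are integral at `p`. -/
def padicIntegral (p : ℕ) [Fact p.Prime] : Subring ℚ where
  __ := padicBall p 0
  one_mem' := by simp [padicBall]
  mul_mem' {x y} hx hy := by
    simp only [padicBall, neg_zero, zpow_zero] at hx hy ⊢
    exact (padicNorm.mul x y).trans_le (mul_le_one₀ hx (padicNorm.nonneg y) hy)

/-- The group of units of `ℤ_(p)`, as a multiplicative submonoid of `ℚ`. -/
def padicUnits (p : ℕ) [Fact p.Prime] : Submonoid ℚ where
  carrier := {x | padicNorm p x = 1}
  one_mem' := padicNorm.one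
  mul_mem' {x y} hx hy := by
    rw [Set.mem_ofPred_eq] at *
    rw [padicNorm.mul, hx, hy, one_mul]

theorem mem_padicBall {e : ℤ} {x : ℚ} : x ∈ padicBall p e ↔ padicNorm p x ≤ (p : ℚ) ^ (-e) :=
  Iff.rfl

theorem mem_padicBall_zero {x : ℚ} : x ∈ padicBall p 0 ↔ x ∈ padicIntegral p := Iff.rfl

theorem mem_padicUnits {x : ℚ} : x ∈ padicUnits p ↔ padicNorm p x = 1 := Iff.rfl

theorem padicBall_iff_le_padicValRat {e : ℤ} {x : ℚ} (hx : x ≠ 0) :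
    x ∈ padicBall p e ↔ e ≤ padicValRat p x := by
  rw [mem_padicBall, padicNorm.eq_zpow_of_nonzero hx,
    zpow_le_zpow_iff_right₀ (by exact_mod_cast hp.out.one_lt), neg_le_neg_iff]

theorem pcong_of_sub_mem_padicBall {m : ℕ} {x y : ℚ} (h : x - y ∈ padicBall p m) :
    pcong p m x y :=
  or_iff_not_imp_left.2 fun hne => (padicBall_iff_le_padicValRat (sub_ne_zero.2 hne)).1 h

theorem padicBall_antitone : Antitone (padicBall p) := fun _ _ h _ hx =>
  mem_padicBall.2 <| (mem_padicBall.1 hx).trans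
    (zpow_le_zpow_right₀ (Nat.one_le_cast.2 hp.out.one_le) (neg_le_neg h))

theorem mul_mem_padicBall {e f : ℤ} {x y : ℚ} (hx : x ∈ padicBall p e) (hy : y ∈ padicBall p f) :
    x * y ∈ padicBall p (e + f) := by
  rw [mem_padicBall, padicNorm.mul, neg_add, zpow_add₀ (by exact_mod_cast hp.out.ne_zero)]
  exact mul_le_mul hx hy (padicNorm.nonneg y) (by positivity)

theorem mul_mem_padicBall_of_left {e : ℤ} {x y : ℚ} (hx : x ∈ padicBall p e)
    (hy : y ∈ padicIntegral p) : x * y ∈ padicBall p e :=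
  add_zero e ▸ mul_mem_padicBall hx (mem_padicBall_zero.2 hy)

theorem mul_mem_padicBall_of_right {e : ℤ} {x y : ℚ} (hx : x ∈ padicIntegral p)
    (hy : y ∈ padicBall p e) : x * y ∈ padicBall p e :=
  mul_comm x y ▸ mul_mem_padicBall_of_left hy hx

theorem pow_mem_padicBall {e : ℤ} {x : ℚ} (hx : x ∈ padicBall p e) (n : ℕ) :
    x ^ n ∈ padicBall p (n * e) := by
  induction n with
  | zero => simpa using mem_padicBall_zero.2 (one_mem (padicIntegral p))
  | succ n ih =>
    rw [pow_succ, Nat.cast_succ, add_one_mul]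
    exact mul_mem_padicBall ih hx

theorem mem_padicIntegral_of_mem_padicBall {e : ℤ} (he : 0 ≤ e) {x : ℚ} (hx : x ∈ padicBall p e) :
    x ∈ padicIntegral p :=
  padicBall_antitone he hx

theorem intCast_mem_padicBall {n : ℕ} {z : ℤ} (h : (p : ℤ) ^ n ∣ z) : (z : ℚ) ∈ padicBall p n :=
  (padicNorm.dvd_iff_norm_le (p := p)).1 (by exact_mod_cast h)

theorem prime_pow_mem_padicBall (n : ℕ) : (p : ℚ) ^ n ∈ padicBall p n := by
  exact_mod_cast intCast_mem_padicBall (dvd_refl ((p : ℤ) ^ n))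

theorem mem_padicIntegral_of_mem_padicUnits {x : ℚ} (hx : x ∈ padicUnits p) :
    x ∈ padicIntegral p :=
  mem_padicBall_zero.1 (mem_padicBall.2 (by rw [mem_padicUnits.1 hx, neg_zero, zpow_zero]))

theorem ne_zero_of_mem_padicUnits {x : ℚ} (hx : x ∈ padicUnits p) : x ≠ 0 := by
  rintro rfl
  simp [mem_padicUnits] at hx

theorem inv_mem_padicUnits {x : ℚ} (hx : x ∈ padicUnits p) : x⁻¹ ∈ padicUnits p := by
  rw [mem_padicUnits, ← one_div, padicNorm.div, padicNorm.one, mem_padicUnits.1 hx, div_one]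

theorem div_mem_padicUnits {x y : ℚ} (hx : x ∈ padicUnits p) (hy : y ∈ padicUnits p) :
    x / y ∈ padicUnits p :=
  div_eq_mul_inv x y ▸ mul_mem hx (inv_mem_padicUnits hy)

theorem div_mem_padicBall {e : ℤ} {x y : ℚ} (hx : x ∈ padicBall p e) (hy : y ∈ padicUnits p) :
    x / y ∈ padicBall p e :=
  div_eq_mul_inv x y ▸ mul_mem_padicBall_of_left hx
    (mem_padicIntegral_of_mem_padicUnits (inv_mem_padicUnits hy))

theorem intCast_mem_padicUnits {z : ℤ} (h : ¬ (p : ℤ) ∣ z) : (z : ℚ) ∈ padicUnits p :=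
  (padicNorm.int_eq_one_iff z).2 h

theorem natCast_mem_padicUnits {n : ℕ} (h : ¬ p ∣ n) : (n : ℚ) ∈ padicUnits p :=
  (padicNorm.nat_eq_one_iff n).2 h

theorem natCast_mem_padicUnits_of_lt {n : ℕ} (h₀ : n ≠ 0) (h : n < p) : (n : ℚ) ∈ padicUnits p :=
  natCast_mem_padicUnits (Nat.not_dvd_of_pos_of_lt (Nat.pos_of_ne_zero h₀) h)

theorem add_mem_padicUnits {x y : ℚ} (hx : x ∈ padicUnits p) (hy : y ∈ padicBall p 1) :
    x + y ∈ padicUnits p := by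
  have hlt : padicNorm p y < padicNorm p x := by
    rw [mem_padicUnits.1 hx]
    exact (mem_padicBall.1 hy).trans_lt
      (zpow_lt_one_of_neg₀ (by exact_mod_cast hp.out.one_lt) (by decide))
  rw [mem_padicUnits, padicNorm.add_eq_max_of_ne hlt.ne', max_eq_left hlt.le, mem_padicUnits.1 hx]

theorem inv_intCast_mem_padicBall {z : ℤ} (hz : z ≠ 0) {n : ℕ} (h : ¬ (p : ℤ) ^ (n + 1) ∣ z) :
    (z : ℚ)⁻¹ ∈ padicBall p (-n) := by
  have hz' : (z : ℚ) ≠ 0 := Int.cast_ne_zero.2 hz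
  rw [padicBall_iff_le_padicValRat (inv_ne_zero hz'), padicValRat.inv, neg_le_neg_iff,
    padicValRat.of_int]
  rw [padicValInt_dvd_iff, not_or, not_le] at h
  exact_mod_cast Nat.lt_succ_iff.1 h.2

theorem mul_sub_mul_mem_padicBall {e : ℤ} {x x' y y' : ℚ} (hx : x ∈ padicIntegral p)
    (hy' : y' ∈ padicIntegral p) (h : x - x' ∈ padicBall p e) (h' : y - y' ∈ padicBall p e) :
    x * y - x' * y' ∈ padicBall p e := by
  rw [show x * y - x' * y' = x * (y - y') + (x - x') * y' by ring]
  exact add_mem (mul_mem_padicBall_of_right hx h') (mul_mem_padicBall_of_left h hy')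

end Padic

theorem coprime_three_of_mod_eq_two {n : ℕ} (h : n % 3 = 2) : n.Coprime 3 :=
  ((Nat.Prime.coprime_iff_not_dvd Nat.prime_three).2 (by omega)).symm

section Valuation

variable {p : ℕ} [hp : Fact p.Prime]

theorem card_filter_dvd_mul_add {n q c r : ℕ} (hn : 0 < n) (hcop : n.Coprime q)
    (hr : n ∣ q * r + c) (k : ℕ) :
    #{l ∈ range k | n ∣ q * l + c} = k / n + if r % n < k % n then 1 else 0 := by
  rw [← Nat.count_modEq_card k hn r, Nat.count_eq_card_filter_range]
  congr 1
  refine filter_congr fun l _ => ⟨fun hl => ?_, fun hl => ?_⟩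
  · have hlr : q * l + c ≡ q * r + c [MOD n] :=
      ((Nat.modEq_zero_iff_dvd).2 hl).trans ((Nat.modEq_zero_iff_dvd).2 hr).symm
    exact (hlr.add_right_cancel' c).cancel_left_of_coprime hcop
  · exact (Nat.modEq_zero_iff_dvd).1
      (((hl.mul_left q).add_right c).trans ((Nat.modEq_zero_iff_dvd).2 hr))

theorem exists_dvd_mul_add {n q : ℕ} (hn : 0 < n) (hcop : n.Coprime q) (c : ℕ) :
    ∃ r, n ∣ q * r + c := by
  have : NeZero n := ⟨hn.ne'⟩
  refine ⟨(-(c : ZMod n) * (q : ZMod n)⁻¹).val, (ZMod.natCast_eq_zero_iff _ _).1 ?_⟩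
  push_cast
  rw [ZMod.natCast_val, ZMod.cast_id', id_eq, mul_left_comm,
    ZMod.coe_mul_inv_eq_one q hcop.symm, mul_one, neg_add_cancel]

theorem card_add_factorization_factorial_le {q c : ℕ} (hq : p.Coprime q) (hc : c ≠ 0) (k : ℕ)
    {I : Finset ℕ} (hI : ∀ i ∈ I, 1 ≤ i ∧ ∃ r, r % p ^ i < k % p ^ i ∧ p ^ i ∣ q * r + c) :
    #I + k.factorial.factorization p ≤ (∏ l ∈ range k, (q * l + c)).factorization p := by
  obtain ⟨b, hkb, hqb, hIb⟩ : ∃ b, Nat.log p k < b ∧ q * k + c < p ^ b ∧ I ⊆ Ico 1 b := by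
    refine ⟨q * k + c + k + I.sup id + 1, ?_, ?_, fun i hi => ?_⟩
    · have := Nat.log_le_self p k
      omega
    · have := Nat.lt_pow_self (n := q * k + c + k + I.sup id + 1) hp.out.one_lt
      omega
    · have := le_sup (f := id) hi
      exact mem_Ico.2 ⟨(hI i hi).1, by rw [id] at this; omega⟩
  have hfact (l) (hl : l ∈ range k) :
      (q * l + c).factorization p = ∑ i ∈ Ico 1 b, if p ^ i ∣ q * l + c then 1 else 0 := by
    rw [Nat.factorization_eq_card_pow_dvd_of_lt hp.out (by omega) (b := b), card_filter]
    exact (Nat.add_le_add_right (Nat.mul_le_mul_left q (mem_range.1 hl).le) c).trans_lt hqb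
  have hcard : #I = ∑ i ∈ Ico 1 b, if i ∈ I then 1 else 0 := by
    rw [sum_ite_mem, inter_eq_right.2 hIb, card_eq_sum_ones]
  rw [Nat.factorization_factorial hp.out hkb, Nat.factorization_prod fun l _ => by omega,
    Finsupp.finsetSum_apply, sum_congr rfl hfact, sum_comm, hcard, ← sum_add_distrib]
  refine sum_le_sum fun i _ => ?_
  have hpos : 0 < p ^ i := pow_pos hp.out.pos i
  have hcop : (p ^ i).Coprime q := hq.pow_left i
  rw [← card_filter]
  split_ifs with hi
  · obtain ⟨-, r, hrk, hr⟩ := hI i hi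
    rw [card_filter_dvd_mul_add hpos hcop hr, if_pos hrk, add_comm]
  · obtain ⟨r, hr⟩ := exists_dvd_mul_add hpos hcop c
    rw [card_filter_dvd_mul_add hpos hcop hr, zero_add]
    exact Nat.le_add_right _ _

theorem pochDiv_mem_padicBall {q c : ℕ} (hq : p.Coprime q) (hc : c ≠ 0) (k : ℕ)
    {I : Finset ℕ} (hI : ∀ i ∈ I, 1 ≤ i ∧ ∃ r, r % p ^ i < k % p ^ i ∧ p ^ i ∣ q * r + c) :
    pochDiv (c / q) k ∈ padicBall p #I := by
  have hpq : ¬ p ∣ q := (Nat.Prime.coprime_iff_not_dvd hp.out).1 hq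
  have hq0 : (q : ℚ) ≠ 0 := Nat.cast_ne_zero.2 (by rintro rfl; simp at hpq)
  set P := ∏ l ∈ range k, (q * l + c)
  have hP0 : P ≠ 0 := prod_ne_zero_iff.2 fun l _ => by omega
  have hpoch : pochDiv (c / q) k = ((P : ℚ) / k.factorial) / q ^ k := by
    have hscale : (P : ℚ) = poch (c / q) k * q ^ k := by
      rw [poch, pow_eq_prod_const, ← prod_mul_distrib, Nat.cast_prod]
      refine prod_congr rfl fun l _ => ?_
      push_cast
      field_simp
      ring
    rw [hscale, pochDiv]
    field_simp
  have hP0' : (P : ℚ) ≠ 0 := Nat.cast_ne_zero.2 hP0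
  have hk0 : (k.factorial : ℚ) ≠ 0 := Nat.cast_ne_zero.2 k.factorial_ne_zero
  rw [hpoch]
  refine div_mem_padicBall ?_ (pow_mem (natCast_mem_padicUnits hpq) k)
  rw [padicBall_iff_le_padicValRat (div_ne_zero hP0' hk0), padicValRat.div hP0' hk0,
    padicValRat.of_nat, padicValRat.of_nat, ← Nat.factorization_def _ hp.out,
    ← Nat.factorization_def _ hp.out]
  have : #I + k.factorial.factorization p ≤ P.factorization p :=
    card_add_factorization_factorial_le hq hc k hI
  omega

theorem pochDiv_one_third_mem_padicIntegral (h3 : p.Coprime 3) (k : ℕ) :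
    pochDiv (1 / 3) k ∈ padicIntegral p :=
  mem_padicBall_zero.1 <| by
    simpa using pochDiv_mem_padicBall h3 one_ne_zero k (I := ∅) (by simp)

theorem pochDiv_one_third_mem_padicBall (h3 : p % 3 = 2) {k : ℕ} (hk : 2 * p - 1 < 3 * k)
    (hkp : k < p) : pochDiv (1 / 3) k ∈ padicBall p 1 := by
  have hcop : p.Coprime 3 := coprime_three_of_mod_eq_two h3
  simpa using pochDiv_mem_padicBall hcop one_ne_zero k (I := {1}) (by
    simp only [mem_singleton, forall_eq, pow_one, le_refl, true_and]
    refine ⟨(2 * p - 1) / 3, ?_, 2, by omega⟩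
    rw [Nat.mod_eq_of_lt hkp, Nat.mod_eq_of_lt] <;> omega)

theorem mod_eq_of_dvd_three_mul_add_one {n k : ℕ} (hn : n % 3 = 2) (h : n ∣ 3 * k + 1) :
    k % n = (2 * n - 1) / 3 := by
  have h₁ : n ∣ 3 * (k % n) + 1 := by
    rw [← Nat.modEq_zero_iff_dvd] at h ⊢
    exact (((Nat.mod_modEq k n).mul_left 3).add_right 1).trans h
  have hlt := Nat.mod_lt k (show n > 0 by omega)
  obtain ⟨t, ht⟩ := h₁
  have ht3 : t < 3 := by
    by_contra! h
    have := Nat.mul_le_mul_left n h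
    omega
  interval_cases t <;> omega

theorem pochDiv_two_thirds_mem_padicBall (h3 : p % 3 = 2) {k t : ℕ}
    (h : p ^ (2 * t - 1) ∣ 3 * k + 1) : pochDiv (2 / 3) k ∈ padicBall p t := by
  have hcop : p.Coprime 3 := coprime_three_of_mod_eq_two h3
  have hcard : #((range t).image (2 * · + 1)) = t := by
    rw [card_image_of_injective _ fun i j hij => by simpa using hij, card_range]
  rw [← hcard]
  refine mod_cast pochDiv_mem_padicBall hcop two_ne_zero k fun i hi => ?_
  obtain ⟨j, hj, rfl⟩ := mem_image.1 hi
  have hmod : p ^ (2 * j + 1) % 3 = 2 := by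
    rw [Nat.pow_mod, h3, pow_succ, pow_mul, Nat.mul_mod, Nat.pow_mod]
    norm_num
  have hdvd : p ^ (2 * j + 1) ∣ 3 * k + 1 :=
    (pow_dvd_pow p (by have := mem_range.1 hj; omega)).trans h
  refine ⟨by omega, (p ^ (2 * j + 1) - 2) / 3, ?_, 1, by omega⟩
  rw [mod_eq_of_dvd_three_mul_add_one hmod hdvd, Nat.mod_eq_of_lt] <;> omega

end Valuation

section HighExponent

variable {p : ℕ} [hp : Fact p.Prime]

theorem three_mem_padicUnits (h3 : p % 3 = 2) : (3 : ℚ) ∈ padicUnits p :=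
  natCast_mem_padicUnits ((Nat.Prime.coprime_iff_not_dvd hp.out).1 (coprime_three_of_mod_eq_two h3))

theorem pochDiv_mul_wpRatio_mem_padicIntegral {N : ℚ} {j : ℕ}
    (h : ∀ i < j, (3 * i + 1 + 3 * N) * (3 * i + 3 - 3 * N) * (3 * i + 4) * (3 * i + 2) /
      ((3 * i + 1) * (3 * i + 3) * (3 * i + 4 - 3 * N) * (3 * i + 2 + 3 * N)) ∈ padicIntegral p) :
    pochDiv (2 / 3) j * (wpRatio (2 / 3) (1 / 3 + N) j * wpRatio (2 / 3) (1 - N) j) *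
      (3 * j + 1) ∈ padicIntegral p := by
  induction j with
  | zero => simp [pochDiv_zero, wpRatio_zero]
  | succ j ih =>
    have hstep := mul_mem (ih fun i hi => h i (hi.trans j.lt_succ_self)) (h j j.lt_succ_self)
    convert hstep using 1
    have hW : pochDiv (2 / 3) (j + 1) = pochDiv (2 / 3) j * (2 / 3 + j) / (j + 1) := by
      rw [← pochDiv_succ_mul, mul_div_cancel_right₀ _ (by positivity)]
    have hden₁ : 1 + 2 / 3 - (1 / 3 + N) + j = (3 * j + 4 - 3 * N) / 3 := by ring
    have hden₂ : 1 + 2 / 3 - (1 - N) + j = (3 * j + 2 + 3 * N) / 3 := by ring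
    rw [wpRatio_succ, wpRatio_succ, hW, hden₁, hden₂]
    push_cast
    generalize (3 * j + 4 - 3 * N : ℚ) = D₁
    generalize (3 * j + 2 + 3 * N : ℚ) = D₂
    simp only [div_eq_mul_inv, mul_inv, inv_inv]
    field_simp
    ring

theorem pochDiv_pow_four_mul_div_mem_padicBall (h3 : p % 3 = 2) {s j : ℕ} (hs : 3 ≤ s)
    (hj : ¬ p ^ (s + 1) ∣ 3 * j + 1) {x : ℚ}
    (hx : pochDiv (2 / 3) j * x * (3 * j + 1) ∈ padicIntegral p) :
    pochDiv (2 / 3) j ^ 4 * x / (3 * j + 1) ∈ padicBall p (5 - 2 * s) := by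
  set e := padicValNat p (3 * j + 1)
  have hdvd : p ^ e ∣ 3 * j + 1 := pow_padicValNat_dvd
  have hndvd : ¬ p ^ (e + 1) ∣ 3 * j + 1 := pow_succ_padicValNat_not_dvd (by omega)
  have hes : e ≤ s := by
    by_contra! h
    exact hj ((pow_dvd_pow p h).trans hdvd)
  have hW : pochDiv (2 / 3) j ^ 3 ∈ padicBall p ((3 : ℕ) * ((e + 1) / 2 : ℕ)) :=
    pow_mem_padicBall (pochDiv_two_thirds_mem_padicBall h3
      ((pow_dvd_pow p (by omega)).trans hdvd)) 3
  have hinv : ((3 * j + 1 : ℤ) : ℚ)⁻¹ ^ 2 ∈ padicBall p ((2 : ℕ) * -(e : ℤ)) :=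
    pow_mem_padicBall (inv_intCast_mem_padicBall (by omega) (by exact_mod_cast hndvd)) 2
  have hprod := mul_mem_padicBall_of_left (mul_mem_padicBall hW hinv) hx
  convert padicBall_antitone ?_ hprod using 1
  · push_cast
    field_simp
  · omega

theorem sum_pochDiv_pow_six_mem_padicBall (h3 : p % 3 = 2) {s N : ℕ} (hs : 3 ≤ s)
    (hN : N * pochDiv (1 / 3) N ∈ padicBall p s) (hunit : (3 * N - 1 : ℚ) ∈ padicUnits p)
    (hdvd : ∀ j < N, ¬ p ^ (s + 1) ∣ 3 * j + 1)
    (hstep : ∀ i : ℕ, i + 1 < N →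
      (3 * i + 1 + 3 * N) * (3 * i + 3 - 3 * N) * (3 * i + 4) * (3 * i + 2) /
        ((3 * i + 1) * (3 * i + 3) * (3 * i + 4 - 3 * N) * (3 * i + 2 + 3 * N) : ℚ) ∈
          padicIntegral p) :
    ∑ k ∈ range N, (6 * k + 1) * pochDiv (1 / 3) k ^ 6 ∈ padicBall p (s + 5) := by
  have hterms : ∑ j ∈ range N, pochDiv (2 / 3) j ^ 4 *
      (wpRatio (2 / 3) (1 / 3 + N) j * wpRatio (2 / 3) (1 - N) j) / (3 * j + 1) ∈
        padicBall p (5 - 2 * s) := sum_mem fun j hj =>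
    pochDiv_pow_four_mul_div_mem_padicBall h3 hs (hdvd j (mem_range.1 hj))
      (pochDiv_mul_wpRatio_mem_padicIntegral fun i hi => hstep i (by have := mem_range.1 hj; omega))
  have hfactor : 54 / (3 * N - 1) * (N * pochDiv (1 / 3) N) ^ 3 ∈ padicBall p ((3 : ℕ) * s) :=
    mul_mem_padicBall_of_right (mem_padicBall_zero.1 (div_mem_padicBall
      (mem_padicBall_zero.2 (natCast_mem (padicIntegral p) 54)) hunit)) (pow_mem_padicBall hN 3)
  rw [sum_pochDiv_pow_six]
  convert mul_mem_padicBall hfactor hterms using 1 <;> ring_nf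

theorem not_dvd_of_lt_two_mul {q w : ℤ} (h : w ≠ 0 ∧ w ≠ q ∧ w ≠ -q)
    (hw : -(2 * q) < w ∧ w < 2 * q) : ¬ q ∣ w := by
  rintro ⟨c, rfl⟩
  have hq : 0 < q := by omega
  have hc₁ : c < 2 := lt_of_mul_lt_mul_left (by linarith) hq.le
  have hc₂ : -2 < c := lt_of_mul_lt_mul_left (by linarith) hq.le
  interval_cases c <;> omega

theorem add_mul_pow_div_mem_padicIntegral {s : ℕ} (w t : ℤ)
    (h : w ≠ 0 ∧ w ≠ (p ^ (s + 1) : ℕ) ∧ w ≠ -(p ^ (s + 1) : ℕ))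
    (hw : -(2 * (p ^ (s + 1) : ℕ)) < w ∧ w < 2 * (p ^ (s + 1) : ℕ)) :
    (w + t * p ^ s) / (w : ℚ) ∈ padicIntegral p := by
  have hdvd : ¬ (p : ℤ) ^ (s + 1) ∣ w := by exact_mod_cast not_dvd_of_lt_two_mul h hw
  have hw0 : (w : ℚ) ≠ 0 := Int.cast_ne_zero.2 h.1
  rw [add_div, div_self hw0, mul_div_assoc, div_eq_mul_inv]
  refine add_mem (one_mem _) (mul_mem (intCast_mem _ t) (mem_padicBall_zero.1 ?_))
  rw [← add_neg_cancel (s : ℤ)]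
  exact mul_mem_padicBall (prime_pow_mem_padicBall s) (inv_intCast_mem_padicBall h.1 hdvd)

theorem pow_mod_three {n : ℕ} (h3 : n % 3 = 2) {s : ℕ} (hs : Odd s) :
    n ^ s % 3 = 2 ∧ n ^ (s + 1) % 3 = 1 := by
  obtain ⟨r, rfl⟩ := hs
  have h : n ^ (2 * r) % 3 = 1 := by
    rw [pow_mul, Nat.pow_mod, Nat.pow_mod n, h3]
    norm_num
  have h' : n ^ (2 * r + 1) % 3 = 2 := by rw [pow_succ, Nat.mul_mod, h, h3]
  exact ⟨h', by rw [pow_succ, Nat.mul_mod, h', h3]⟩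

theorem five_mul_pow_le {n : ℕ} (h5 : 5 ≤ n) (s : ℕ) : 5 * n ^ s ≤ n ^ (s + 1) :=
  pow_succ' n s ▸ Nat.mul_le_mul_right _ h5

theorem sum_range_pow_pochDiv_pow_six_mem_padicBall (h3 : p % 3 = 2) (h5 : 5 ≤ p) {s : ℕ}
    (hs : 3 ≤ s) (hs' : Odd s) :
    ∑ k ∈ range (p ^ s), (6 * k + 1) * pochDiv (1 / 3) k ^ 6 ∈ padicBall p (s + 5) := by
  have hcop : p.Coprime 3 := coprime_three_of_mod_eq_two h3
  have hpow := five_mul_pow_le h5 s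
  obtain ⟨hq, hq'⟩ := pow_mod_three h3 hs'
  refine sum_pochDiv_pow_six_mem_padicBall h3 hs ?_ ?_ (fun j hj => ?_) fun i hi => ?_
  · exact_mod_cast mul_mem_padicBall_of_left (prime_pow_mem_padicBall s)
      (pochDiv_one_third_mem_padicIntegral hcop (p ^ s))
  · have hdvd : ¬ (p : ℤ) ∣ 3 * (p ^ s : ℕ) - 1 := by
      have h : (p : ℤ) ∣ 3 * (p ^ s : ℕ) := by
        exact_mod_cast (dvd_pow_self p (by omega)).mul_left 3
      rw [dvd_sub_right h]
      exact_mod_cast hp.out.one_lt.ne' ∘ Nat.dvd_one.1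
    exact_mod_cast intCast_mem_padicUnits hdvd
  · exact Nat.not_dvd_of_pos_of_lt (by omega) (by omega)
  · have hfrac := add_mul_pow_div_mem_padicIntegral (p := p) (s := s)
    convert mul_mem
      (mul_mem (hfrac (3 * i + 1) 3 (by omega) (by omega))
        (hfrac (3 * i + 3) (-3) (by omega) (by omega)))
      (mul_mem (hfrac (3 * i + 4 - 3 * (p ^ s : ℕ)) 3 (by omega) (by omega))
        (hfrac (3 * i + 2 + 3 * (p ^ s : ℕ)) (-3) (by omega) (by omega))) using 1
    push_cast
    rw [div_mul_div_comm, div_mul_div_comm, div_mul_div_comm]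
    congr 1 <;> ring

theorem sum_range_succ_pochDiv_pow_six_mem_padicBall (h3 : p % 3 = 2) (h5 : 5 ≤ p) {s M : ℕ}
    (hs : 3 ≤ s) (hs' : Odd s) (hM : 3 * M + 1 = 2 * p ^ s) :
    ∑ k ∈ range (M + 1), (6 * k + 1) * pochDiv (1 / 3) k ^ 6 ∈ padicBall p (s + 5) := by
  have hcop : p.Coprime 3 := coprime_three_of_mod_eq_two h3
  have hpow := five_mul_pow_le h5 s
  obtain ⟨hq, hq'⟩ := pow_mod_three h3 hs'
  have hMQ : (3 * M + 1 : ℚ) = 2 * p ^ s := by exact_mod_cast hM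
  refine sum_pochDiv_pow_six_mem_padicBall h3 hs ?_ ?_ (fun j hj => ?_) fun i hi => ?_
  · have hsucc := pochDiv_succ_mul (1 / 3) M
    have h : p ^ s * (2 * pochDiv (1 / 3) M) / 3 ∈ padicBall p s :=
      div_mem_padicBall (mul_mem_padicBall_of_left (prime_pow_mem_padicBall s) (mul_mem
        (natCast_mem _ 2) (pochDiv_one_third_mem_padicIntegral hcop M))) (three_mem_padicUnits h3)
    convert h using 1
    push_cast
    linear_combination hsucc + pochDiv (1 / 3) M / 3 * hMQ
  · have h : (1 : ℚ) + 2 * p ^ s ∈ padicUnits p :=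
      add_mem_padicUnits (one_mem _) (mul_mem_padicBall_of_right (natCast_mem _ 2)
        (padicBall_antitone (by omega) (prime_pow_mem_padicBall s)))
    convert h using 1
    push_cast
    linear_combination hMQ
  · exact Nat.not_dvd_of_pos_of_lt (by omega) (by omega)
  · have hfrac := add_mul_pow_div_mem_padicIntegral (p := p) (s := s)
    convert mul_mem
      (mul_mem (hfrac (3 * i + 3) 2 (by omega) (by omega))
        (hfrac (3 * i + 1) (-2) (by omega) (by omega)))
      (mul_mem (hfrac (3 * i + 2 - 2 * (p ^ s : ℕ)) 2 (by omega) (by omega))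
        (hfrac (3 * i + 4 + 2 * (p ^ s : ℕ)) (-2) (by omega) (by omega))) using 1
    push_cast
    rw [div_mul_div_comm, div_mul_div_comm, div_mul_div_comm,
      show (M : ℚ) = (2 * p ^ s - 1) / 3 by linarith]
    congr 1 <;> ring

end HighExponent

section PolyApprox

open Polynomial

variable {p : ℕ} [hp : Fact p.Prime]

theorem aeval_mem_padicIntegral (q : (padicIntegral p)[X]) {y : ℚ} (hy : y ∈ padicIntegral p) :
    aeval y q ∈ padicIntegral p := by
  have h := aeval_algebraMap_apply ℚ (⟨y, hy⟩ : padicIntegral p) q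
  exact h ▸ SetLike.coe_mem _

/-- The ring of functions on `p ℤ_(p)` that agree modulo `p ^ n` with a polynomial with coefficients
in `ℤ_(p)`. They are total functions on `ℚ`, with no condition outside `p ℤ_(p)`. -/
def polyApprox (p : ℕ) [Fact p.Prime] (n : ℕ) : Subring (ℚ → ℚ) where
  carrier := {f | ∃ q : (padicIntegral p)[X], ∀ y ∈ padicBall p 1, f y - aeval y q ∈ padicBall p n}
  zero_mem' := ⟨0, fun y _ => by simp⟩
  one_mem' := ⟨1, fun y _ => by simp⟩
  add_mem' := by
    rintro f g ⟨q, hq⟩ ⟨r, hr⟩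
    refine ⟨q + r, fun y hy => ?_⟩
    rw [Pi.add_apply, map_add, add_sub_add_comm]
    exact add_mem (hq y hy) (hr y hy)
  neg_mem' := by
    rintro f ⟨q, hq⟩
    refine ⟨-q, fun y hy => ?_⟩
    rw [Pi.neg_apply, map_neg, ← neg_sub']
    exact neg_mem (hq y hy)
  mul_mem' := by
    rintro f g ⟨q, hq⟩ ⟨r, hr⟩
    refine ⟨q * r, fun y hy => ?_⟩
    have hy' : y ∈ padicIntegral p := mem_padicIntegral_of_mem_padicBall zero_le_one hy
    have hf : f y ∈ padicIntegral p := by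
      simpa using add_mem (mem_padicIntegral_of_mem_padicBall n.cast_nonneg (hq y hy))
        (aeval_mem_padicIntegral q hy')
    rw [Pi.mul_apply, map_mul]
    exact mul_sub_mul_mem_padicBall hf (aeval_mem_padicIntegral r hy') (hq y hy) (hr y hy)

variable {n : ℕ}

theorem add_mul_mem_polyApprox {α β : ℚ} (hα : α ∈ padicIntegral p) (hβ : β ∈ padicIntegral p) :
    (fun y => α + β * y) ∈ polyApprox p n := by
  refine ⟨C ⟨α, hα⟩ + C ⟨β, hβ⟩ * X, fun y _ => ?_⟩
  rw [map_add, map_mul, aeval_C, aeval_C, aeval_X]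
  exact (sub_self (α + β * y)).symm ▸ zero_mem _

theorem inv_add_mul_mem_polyApprox {α β : ℚ} (hα : α ∈ padicUnits p) (hβ : β ∈ padicIntegral p) :
    (fun y => (α + β * y)⁻¹) ∈ polyApprox p n := by
  have hα' : α⁻¹ ∈ padicIntegral p := mem_padicIntegral_of_mem_padicUnits (inv_mem_padicUnits hα)
  refine ⟨C ⟨α⁻¹, hα'⟩ * ∑ d ∈ range n, (C ⟨-(β * α⁻¹), neg_mem (mul_mem hβ hα')⟩ * X) ^ d,
    fun y hy => ?_⟩
  have hunit : α + β * y ∈ padicUnits p := add_mem_padicUnits hα (mul_mem_padicBall_of_right hβ hy)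
  have hα0 := ne_zero_of_mem_padicUnits hα
  have hunit0 := ne_zero_of_mem_padicUnits hunit
  set z := -(β * α⁻¹) * y
  have hz : z ∈ padicBall p 1 := mul_mem_padicBall_of_right (neg_mem (mul_mem hβ hα')) hy
  have hzα : α + β * y = α * (1 - z) := by simp only [z]; field_simp; ring
  have hgeom : (α + β * y)⁻¹ - α⁻¹ * ∑ d ∈ range n, z ^ d = z ^ n / (α + β * y) := by
    have hz1 : 1 - z ≠ 0 := right_ne_zero_of_mul (hzα ▸ hunit0)
    rw [hzα]
    field_simp
    linear_combination -(mul_neg_geom_sum z n)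
  have heval : aeval y (C ⟨α⁻¹, hα'⟩ *
      ∑ d ∈ range n, (C (⟨-(β * α⁻¹), neg_mem (mul_mem hβ hα')⟩ : padicIntegral p) * X) ^ d) =
        α⁻¹ * ∑ d ∈ range n, z ^ d := by
    simp only [map_mul, map_sum, map_pow, aeval_C, aeval_X]
    rfl
  rw [heval, hgeom]
  have hzn := pow_mem_padicBall hz n
  rw [mul_one] at hzn
  exact div_mem_padicBall hzn hunit

theorem sub_sum_mul_mem_padicBall {f : ℚ → ℚ} (hf : f ∈ polyApprox p n) {ι : Type*} [Fintype ι]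
    {c u : ι → ℚ} (hc : ∀ i, c i ∈ padicIntegral p) (hu : ∀ i, u i ∈ padicIntegral p)
    (hcu : ∀ d < n, ∑ i, c i * u i ^ d = if d = 0 then 1 else 0) {y : ℚ} (hy : y ∈ padicBall p 1) :
    f 0 - ∑ i, c i * f (u i * y) ∈ padicBall p n := by
  obtain ⟨q, hq⟩ := hf
  have hpoly : aeval 0 q - ∑ i, c i * aeval (u i * y) q ∈ padicBall p n := by
    have hcoeff (x : ℚ) : aeval x q = ∑ d ∈ range (q.natDegree + 1), (q.coeff d : ℚ) * x ^ d :=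
      aeval_eq_sum_range x
    have heq : aeval 0 q - ∑ i, c i * aeval (u i * y) q =
        ∑ d ∈ range (q.natDegree + 1), (q.coeff d : ℚ) *
          (((if d = 0 then 1 else 0) - ∑ i, c i * u i ^ d) * y ^ d) := by
      simp only [hcoeff, mul_sum, sub_mul, sum_mul, mul_sub, sum_sub_distrib]
      rw [sum_comm (s := univ)]
      congr 1
      · exact sum_congr rfl fun d _ => by rcases eq_or_ne d 0 with rfl | hd <;> simp [*]
      · exact sum_congr rfl fun d _ => sum_congr rfl fun i _ => by ring
    rw [heq]
    refine sum_mem fun d _ => mul_mem_padicBall_of_right (SetLike.coe_mem _) ?_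
    rcases lt_or_ge d n with hd | hd
    · rw [hcu d hd, sub_self, zero_mul]
      exact zero_mem _
    · have hyd := pow_mem_padicBall hy d
      refine mul_mem_padicBall_of_right (sub_mem ?_ (sum_mem fun i _ =>
        mul_mem (hc i) (pow_mem (hu i) d))) (padicBall_antitone (by omega) hyd)
      split_ifs
      exacts [one_mem _, zero_mem _]
  have hnodes : ∑ i, c i * (f (u i * y) - aeval (u i * y) q) ∈ padicBall p n := sum_mem fun i _ =>
    mul_mem_padicBall_of_right (hc i) (hq _ (mul_mem_padicBall_of_right (hu i) hy))
  convert sub_mem (add_mem (hq 0 (zero_mem _)) hpoly) hnodes using 1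
  simp only [mul_sub, sum_sub_distrib]
  ring

end PolyApprox

section PolyApprox

variable {p : ℕ} [hp : Fact p.Prime] {n : ℕ}

theorem poch_mem_polyApprox {α β : ℚ} (hα : α ∈ padicIntegral p) (hβ : β ∈ padicIntegral p)
    (k : ℕ) : (fun y => poch (α + β * y) k) ∈ polyApprox p n := by
  have hprod := prod_mem (S := polyApprox p n) (t := range k) fun i _ =>
    add_mul_mem_polyApprox (add_mem hα (natCast_mem _ i)) hβ
  convert hprod using 1
  ext y
  rw [Finset.prod_apply, poch]
  exact prod_congr rfl fun i _ => by ring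

theorem inv_poch_mem_polyApprox {α β : ℚ} {k : ℕ} (hα : ∀ i < k, α + i ∈ padicUnits p)
    (hβ : β ∈ padicIntegral p) : (fun y => (poch (α + β * y) k)⁻¹) ∈ polyApprox p n := by
  have hprod := prod_mem (S := polyApprox p n) (t := range k) fun i hi =>
    inv_add_mul_mem_polyApprox (hα i (mem_range.1 hi)) hβ
  convert hprod using 1
  ext y
  rw [Finset.prod_apply, poch, ← prod_inv_distrib]
  exact prod_congr rfl fun i _ => by ring

theorem one_add_natCast_mem_padicUnits {i : ℕ} (h : i + 1 < p) : (1 + i : ℚ) ∈ padicUnits p := by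
  have := natCast_mem_padicUnits_of_lt (p := p) i.succ_ne_zero h
  rwa [Nat.cast_succ, add_comm] at this

theorem factorial_mem_padicUnits {k : ℕ} (h : k < p) : (k.factorial : ℚ) ∈ padicUnits p :=
  natCast_mem_padicUnits fun hdvd => h.not_ge ((Nat.Prime.dvd_factorial hp.out).1 hdvd)

theorem pochDiv_mem_polyApprox {α β : ℚ} (hα : α ∈ padicIntegral p) (hβ : β ∈ padicIntegral p)
    {k : ℕ} (hk : k < p) : (fun y => pochDiv (α + β * y) k) ∈ polyApprox p n := by
  have hfact := add_mul_mem_polyApprox (p := p) (n := n) (mem_padicIntegral_of_mem_padicUnits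
    (inv_mem_padicUnits (factorial_mem_padicUnits hk))) (zero_mem _)
  convert mul_mem (poch_mem_polyApprox hα hβ k) hfact using 1
  ext y
  rw [Pi.mul_apply, pochDiv, zero_mul, add_zero, div_eq_mul_inv]

theorem wpRatio_mem_polyApprox {α β γ : ℚ} (hα : α ∈ padicIntegral p) (hβ : β ∈ padicIntegral p)
    (hγ : γ ∈ padicIntegral p) {k : ℕ} (hk : k < p) :
    (fun y => wpRatio (α - γ * y) (α - β * y) k) ∈ polyApprox p n := by
  have hnum := poch_mem_polyApprox (n := n) hα (neg_mem hβ) k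
  have hden := inv_poch_mem_polyApprox (p := p) (n := n) (k := k)
    (fun i hi => one_add_natCast_mem_padicUnits (by omega)) (sub_mem hβ hγ)
  convert mul_mem hnum hden using 1
  ext y
  rw [Pi.mul_apply, wpRatio, div_eq_mul_inv]
  ring_nf

theorem veryWellPoisedSum_mem_polyApprox {α : ℚ} (hα : α ∈ padicIntegral p) (γ : ℕ)
    (B : Multiset ℕ) {N : ℕ} (hN : N ≤ p) :
    (fun y => veryWellPoisedSum (α - γ * y) (B.map fun b : ℕ => α - b * y) N) ∈ polyApprox p n := by
  have hprod (A : Multiset ℕ) {k : ℕ} (hk : k < p) :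
      (fun y => ((A.map fun b : ℕ => α - b * y).map (wpRatio (α - γ * y) · k)).prod) ∈
        polyApprox p n := by
    induction A using Multiset.induction with
    | empty => exact one_mem (polyApprox p n)
    | cons b A ih =>
      simp only [Multiset.map_cons, Multiset.prod_cons]
      exact mul_mem (wpRatio_mem_polyApprox hα (natCast_mem _ b) (natCast_mem _ γ) hk) ih
  have hsum := sum_mem (S := polyApprox p n) (t := range N) fun k hk => mul_mem
    (add_mul_mem_polyApprox (add_mem hα (mul_mem (natCast_mem _ 2) (natCast_mem _ k)))
      (neg_mem (natCast_mem (padicIntegral p) γ)))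
    (hprod (γ ::ₘ B) ((mem_range.1 hk).trans_le hN))
  convert hsum using 1
  ext y
  rw [Finset.sum_apply, veryWellPoisedSum]
  refine sum_congr rfl fun k _ => ?_
  simp only [Pi.mul_apply, Multiset.map_cons]
  push_cast
  ring

end PolyApprox

section Linearisation

variable {p : ℕ} [hp : Fact p.Prime]

theorem mul_sub_one_add_mem_padicBall {x y u v : ℚ} (hu : u ∈ padicBall p 1)
    (hv : v ∈ padicBall p 1) (hx : x - (1 + u) ∈ padicBall p 2) (hy : y - (1 + v) ∈ padicBall p 2) :
    x * y - (1 + (u + v)) ∈ padicBall p 2 := by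
  have hu' : 1 + u ∈ padicIntegral p :=
    add_mem (one_mem _) (mem_padicIntegral_of_mem_padicBall zero_le_one hu)
  have hv' : 1 + v ∈ padicIntegral p :=
    add_mem (one_mem _) (mem_padicIntegral_of_mem_padicBall zero_le_one hv)
  have hx' : x ∈ padicIntegral p := by
    simpa using add_mem (mem_padicIntegral_of_mem_padicBall zero_le_two hx) hu'
  have huv : u * v ∈ padicBall p 2 := one_add_one_eq_two (R := ℤ) ▸ mul_mem_padicBall hu hv
  rw [show x * y - (1 + (u + v)) = x * y - (1 + u) * (1 + v) + u * v by ring]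
  exact add_mem (mul_sub_mul_mem_padicBall hx' hv' hx hy) huv

theorem harmonic_mem_padicIntegral {M : ℕ} (hM : M < p) : harmonic M ∈ padicIntegral p :=
  sum_mem fun i hi => mem_padicIntegral_of_mem_padicUnits <| inv_mem_padicUnits <| by
    exact_mod_cast natCast_mem_padicUnits_of_lt i.succ_ne_zero (by have := mem_range.1 hi; omega)

theorem pochDiv_one_add_sub_mem_padicBall {M : ℕ} (hM : M < p) {z : ℚ} (hz : z ∈ padicBall p 1) :
    pochDiv (1 + z) M - (1 + z * harmonic M) ∈ padicBall p 2 := by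
  induction M with
  | zero => simp [pochDiv_zero, harmonic_zero]
  | succ M ih =>
    have hM' : (M + 1 : ℚ) ∈ padicUnits p := by
      exact_mod_cast natCast_mem_padicUnits_of_lt M.succ_ne_zero hM
    have hstep : pochDiv (1 + z) (M + 1) = pochDiv (1 + z) M * (1 + z / (M + 1)) := by
      have h0 := ne_zero_of_mem_padicUnits hM'
      rw [← mul_left_inj' h0, pochDiv_succ_mul]
      field_simp
      ring
    have h := mul_sub_one_add_mem_padicBall
      (mul_mem_padicBall_of_left hz (harmonic_mem_padicIntegral (by omega)))
      (div_mem_padicBall hz hM') (ih (by omega)) ((sub_self (1 + z / (M + 1))).symm ▸ zero_mem _)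
    rw [hstep, harmonic_succ]
    convert h using 2
    push_cast
    ring

theorem prod_pochDiv_one_add_sub_mem_padicBall {M : ℕ} (hM : M < p) {Z : Multiset ℚ}
    (hZ : ∀ z ∈ Z, z ∈ padicBall p 1) :
    (Z.map fun z => pochDiv (1 + z) M).prod - (1 + Z.sum * harmonic M) ∈ padicBall p 2 := by
  induction Z using Multiset.induction with
  | empty => simp
  | cons z Z ih =>
    rw [Multiset.map_cons, Multiset.prod_cons, Multiset.sum_cons, add_mul]
    have hz := hZ z (Multiset.mem_cons_self z Z)
    have hZ' := fun x hx => hZ x (Multiset.mem_cons_of_mem hx)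
    have hH := harmonic_mem_padicIntegral hM
    exact mul_sub_one_add_mem_padicBall (mul_mem_padicBall_of_left hz hH)
      (mul_mem_padicBall_of_left (multiset_sum_mem Z hZ') hH)
      (pochDiv_one_add_sub_mem_padicBall hM hz) (ih hZ')

theorem poch_sub_natCast_two_mul_add_one (w : ℚ) (j : ℕ) :
    poch (w - j) (2 * j + 1) = w * ∏ i ∈ range j, (w ^ 2 - (i + 1) ^ 2) := by
  induction j with
  | zero => simp [poch]
  | succ j ih =>
    rw [show 2 * (j + 1) + 1 = 2 * j + 1 + 1 + 1 by ring, poch_succ, poch_succ', prod_range_succ,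
      ← mul_assoc, ← ih]
    push_cast
    rw [show w - (j + 1) + 1 = w - j by ring]
    ring

theorem exists_pochDiv_sub_natCast_sub_mem_padicBall {j : ℕ} (hj : 2 * j + 1 < p) :
    ∃ K ∈ padicIntegral p, ∀ w ∈ padicBall p 1,
      pochDiv (w - j) (2 * j + 1) - K * w ∈ padicBall p 3 := by
  have hfact := factorial_mem_padicUnits hj
  have hint (k : ℕ) (w : ℚ) (hw : w ∈ padicIntegral p) :
      ∏ i ∈ range k, (w ^ 2 - (i + 1) ^ 2) ∈ padicIntegral p := prod_mem fun i _ =>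
    sub_mem (pow_mem hw 2) (pow_mem (add_mem (natCast_mem _ i) (one_mem _)) 2)
  have hprod (k : ℕ) (w : ℚ) (hw : w ∈ padicBall p 1) : ∏ i ∈ range k, (w ^ 2 - (i + 1) ^ 2) -
      ∏ i ∈ range k, (0 ^ 2 - ((i : ℚ) + 1) ^ 2) ∈ padicBall p 2 := by
    induction k with
    | zero => simp
    | succ k ih =>
      rw [prod_range_succ, prod_range_succ]
      have hw2 : w ^ 2 ∈ padicBall p 2 := pow_mem_padicBall hw 2
      refine mul_sub_mul_mem_padicBall
        (hint k w (mem_padicIntegral_of_mem_padicBall zero_le_one hw)) ?_ ih (by simpa using hw2)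
      simpa using pow_mem (add_mem (natCast_mem _ k) (one_mem (padicIntegral p))) 2
  refine ⟨(∏ i ∈ range j, (0 ^ 2 - ((i : ℚ) + 1) ^ 2)) / (2 * j + 1).factorial, ?_, fun w hw => ?_⟩
  · exact mem_padicBall_zero.1
      (div_mem_padicBall (mem_padicBall_zero.2 (hint j 0 (zero_mem _))) hfact)
  · rw [pochDiv, poch_sub_natCast_two_mul_add_one, show (3 : ℤ) = 1 + 2 by rfl]
    convert div_mem_padicBall (mul_mem_padicBall hw (hprod j w hw)) hfact using 1
    rw [div_mul_eq_mul_div, ← sub_div, mul_sub, mul_comm w (∏ i ∈ range j, (0 ^ 2 - _))]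

end Linearisation

section ExponentOne

/-- The deformation of `∑_{k ≤ M} (6k + 1) ((1/3)_k / k!) ^ 6` (the value at `y = 0`) in which the
upper parameters `1/3` become `1/3 - b y` for `b = 10, 2, 3, 4, 5, 6`, so that the series is
2-balanced when it terminates through one of the last five. The factor `pochDiv (1 - 10 * y) M ^ 3`
makes the sum of the arguments of the Pochhammer quotients in its closed form vanish. -/
def deformedSum (M : ℕ) (y : ℚ) : ℚ :=
  3 * veryWellPoisedSum (1 / 3 - 10 * y)
    (({2, 3, 4, 5, 6} : Multiset ℕ).map fun b : ℕ => 1 / 3 - b * y) (M + 1) *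
      pochDiv (1 - 10 * y) M ^ 3

theorem deformedSum_zero (M : ℕ) :
    deformedSum M 0 = ∑ k ∈ range (M + 1), (6 * k + 1) * pochDiv (1 / 3) k ^ 6 := by
  have hone : pochDiv 1 M = 1 := by
    rw [pochDiv, poch_one, div_self (Nat.cast_ne_zero.2 M.factorial_ne_zero)]
  rw [deformedSum, veryWellPoisedSum, mul_zero, sub_zero, sub_zero, hone, one_pow, mul_one, mul_sum]
  refine sum_congr rfl fun k _ => ?_
  simp only [mul_zero, sub_zero, Multiset.insert_eq_cons, Multiset.map_cons,
    Multiset.map_singleton, Multiset.prod_cons, Multiset.prod_singleton, wpRatio_self]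
  ring

theorem veryWellPoisedSum_deformed_dougall {M b c d e v : ℕ} {x : ℚ} (hsum : b + c + d + e + v = 20)
    (hx : v * x = M + 1 / 3)
    (hden : ∀ w ∈ ({b, c, d, e} : Multiset ℕ), ∀ k ≤ M, 1 + (w - 10) * x + k ≠ 0)
    (ha : ∀ k < 2 * M, 4 / 3 - 10 * x + k ≠ 0) :
    veryWellPoisedSum (1 / 3 - 10 * x)
        (({b, c, d, e, v} : Multiset ℕ).map fun w : ℕ => 1 / 3 - w * x) (M + 1) =
      (M + 1 / 3 - 10 * x) * (pochDiv (2 / 3 + (b + c - 10) * x) M *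
        pochDiv (2 / 3 + (b + d - 10) * x) M * pochDiv (2 / 3 + (c + d - 10) * x) M) *
          (pochDiv (1 + (10 * x - (M + 1 / 3))) M /
            (({b, c, d, e} : Multiset ℕ).map fun w : ℕ => pochDiv (1 + (w - 10) * x) M).prod) := by
  have hx0 : 0 < x := pos_of_mul_pos_right (by rw [hx]; positivity) v.cast_nonneg
  have hsum' : (b + c + d + e + v : ℚ) = 20 := by exact_mod_cast hsum
  have hshift (w : ℚ) : 1 + (1 / 3 - 10 * x) - (1 / 3 - w * x) = 1 + (w - 10) * x := by ring
  have hpair (w w' : ℚ) : 1 + (w - 10) * x - (1 / 3 - w' * x) =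
      2 / 3 + (w + w' - 10) * x := by ring
  simp only [Multiset.insert_eq_cons, Multiset.mem_cons, Multiset.mem_singleton, forall_eq_or_imp,
    forall_eq] at hden
  obtain ⟨hb, hc, hd, he⟩ := hden
  have hdougall := veryWellPoisedSum_dougall (a := 1 / 3 - 10 * x) (b := 1 / 3 - b * x)
    (c := 1 / 3 - c * x) (d := 1 / 3 - d * x) (e := 1 / 3 - e * x) M
    (by linear_combination -x * hsum' + hx)
    (fun k hk => by rw [hshift]; exact hb k hk.le) (fun k hk => by rw [hshift]; exact hc k hk.le)
    (fun k hk => by rw [hshift]; exact hd k hk.le) (fun k hk => by rw [hshift]; exact he k hk)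
    (fun k hk => by convert ha k hk using 1; ring)
    (fun k _ => ne_of_lt (by have : 0 ≤ e * x := by positivity
                             have : (0 : ℚ) ≤ k := k.cast_nonneg
                             linarith))
  rw [← show 1 / 3 - v * x = -(M : ℚ) by rw [hx]; ring] at hdougall
  simp only [hshift, hpair] at hdougall
  simp only [Multiset.insert_eq_cons, Multiset.map_cons, Multiset.map_singleton,
    Multiset.prod_cons, Multiset.prod_singleton] at hdougall ⊢
  rw [hdougall, show 1 - (1 / 3 - 10 * x) - M = 1 + (10 * x - (M + 1 / 3)) by ring]
  have hfact : (M.factorial : ℚ) ≠ 0 := Nat.cast_ne_zero.2 M.factorial_ne_zero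
  simp only [pochDiv]
  field_simp
  ring

theorem deformedSum_eq_mul {M b c d e v : ℕ} (hB : ({b, c, d, e, v} : Multiset ℕ) = {2, 3, 4, 5, 6})
    {x : ℚ} (hx : v * x = M + 1 / 3)
    (hden : ∀ w ∈ ({b, c, d, e} : Multiset ℕ), ∀ k ≤ M, 1 + (w - 10) * x + k ≠ 0)
    (ha : ∀ k < 2 * M, 4 / 3 - 10 * x + k ≠ 0) :
    deformedSum M x =
      3 * (M + 1 / 3 - 10 * x) * (pochDiv (2 / 3 + (b + c - 10) * x) M *
        pochDiv (2 / 3 + (b + d - 10) * x) M * pochDiv (2 / 3 + (c + d - 10) * x) M) *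
          ((({10 * x - (M + 1 / 3), -(10 * x), -(10 * x), -(10 * x)} : Multiset ℚ).map
            fun y => pochDiv (1 + y) M).prod /
              (({(b - 10) * x, (c - 10) * x, (d - 10) * x, (e - 10) * x} : Multiset ℚ).map
                fun z => pochDiv (1 + z) M).prod) := by
  have hsum : b + c + d + e + v = 20 := by simpa [add_assoc] using congrArg Multiset.sum hB
  rw [deformedSum, ← hB, veryWellPoisedSum_deformed_dougall hsum hx hden ha]
  simp only [Multiset.insert_eq_cons, Multiset.map_cons, Multiset.map_singleton,
    Multiset.prod_cons, Multiset.prod_singleton, ← sub_eq_add_neg]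
  ring

variable {p : ℕ} [hp : Fact p.Prime]

theorem deformedSum_mem_polyApprox (h3 : p % 3 = 2) {M n : ℕ} (hM : M < p) :
    deformedSum M ∈ polyApprox p n := by
  have hthird : (1 / 3 : ℚ) ∈ padicIntegral p := mem_padicIntegral_of_mem_padicUnits <|
    div_mem_padicUnits (one_mem _) (three_mem_padicUnits h3)
  have hsum := veryWellPoisedSum_mem_polyApprox (n := n) hthird 10 {2, 3, 4, 5, 6}
    (N := M + 1) hM
  have hE := pochDiv_mem_polyApprox (n := n) (one_mem (padicIntegral p))
    (neg_mem (natCast_mem _ 10)) hM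
  convert mul_mem (mul_mem (natCast_mem _ 3) hsum) (pow_mem hE 3) using 1
  ext y
  simp only [deformedSum, Pi.mul_apply, Pi.pow_apply, Pi.natCast_apply]
  push_cast
  ring_nf

theorem one_add_mul_add_ne_zero {x : ℚ} (hx : x ∈ padicBall p 1) (w : ℤ) {k : ℕ} (hk : k + 1 < p) :
    1 + w * x + k ≠ 0 := by
  rw [add_right_comm]
  exact ne_zero_of_mem_padicUnits (add_mem_padicUnits (one_add_natCast_mem_padicUnits hk)
    (mul_mem_padicBall_of_right (intCast_mem _ w) hx))

theorem prod_pochDiv_one_add_mem_padicUnits {M : ℕ} (hM : M < p) {Z : Multiset ℚ}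
    (hZ : ∀ z ∈ Z, z ∈ padicBall p 1) : (Z.map fun z => pochDiv (1 + z) M).prod ∈ padicUnits p := by
  have h := add_mem (padicBall_antitone one_le_two (prod_pochDiv_one_add_sub_mem_padicBall hM hZ))
    (mul_mem_padicBall_of_left (multiset_sum_mem Z hZ) (harmonic_mem_padicIntegral hM))
  convert add_mem_padicUnits (one_mem (padicUnits p)) h using 1
  ring

theorem prod_pochDiv_one_add_div_sub_one_mem_padicBall {M : ℕ} (hM : M < p) {Y Z : Multiset ℚ}
    (hY : ∀ y ∈ Y, y ∈ padicBall p 1) (hZ : ∀ z ∈ Z, z ∈ padicBall p 1) (hsum : Y.sum = Z.sum) :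
    (Y.map fun y => pochDiv (1 + y) M).prod / (Z.map fun z => pochDiv (1 + z) M).prod - 1 ∈
      padicBall p 2 := by
  have hunit := prod_pochDiv_one_add_mem_padicUnits hM hZ
  have hY := prod_pochDiv_one_add_sub_mem_padicBall hM hY
  have hZ := prod_pochDiv_one_add_sub_mem_padicBall hM hZ
  rw [← hsum] at hZ
  convert div_mem_padicBall (sub_mem hY hZ) hunit using 1
  rw [sub_sub_sub_cancel_right, sub_div, div_self (ne_zero_of_mem_padicUnits hunit)]

theorem mul_mul_sub_mul_mul_mem_padicBall {e f : ℤ} {x₁ x₂ x₃ y₁ y₂ y₃ : ℚ}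
    (hx₂ : x₂ ∈ padicBall p e) (hx₃ : x₃ ∈ padicBall p e)
    (hy₁ : y₁ ∈ padicBall p e) (hy₂ : y₂ ∈ padicBall p e) (h₁ : x₁ - y₁ ∈ padicBall p f)
    (h₂ : x₂ - y₂ ∈ padicBall p f) (h₃ : x₃ - y₃ ∈ padicBall p f) :
    x₁ * x₂ * x₃ - y₁ * y₂ * y₃ ∈ padicBall p (2 * e + f) := by
  rw [show x₁ * x₂ * x₃ - y₁ * y₂ * y₃ =
      (x₂ * x₃) * (x₁ - y₁) + (y₁ * x₃) * (x₂ - y₂) + (y₁ * y₂) * (x₃ - y₃) by ring, two_mul]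
  exact add_mem (add_mem (mul_mem_padicBall (mul_mem_padicBall hx₂ hx₃) h₁)
    (mul_mem_padicBall (mul_mem_padicBall hy₁ hx₃) h₂))
      (mul_mem_padicBall (mul_mem_padicBall hy₁ hy₂) h₃)

theorem prime_div_three_mem_padicBall (h3 : p % 3 = 2) : (p : ℚ) / 3 ∈ padicBall p 1 :=
  div_mem_padicBall (by simpa using prime_pow_mem_padicBall (p := p) 1) (three_mem_padicUnits h3)

theorem prod_pochDiv_deformed_div_sub_one_mem_padicBall {M b c d e v : ℕ} (hM : M < p)
    (hsum : b + c + d + e + v = 20) {l x : ℚ} (hx : x ∈ padicBall p 1) (hl : l ∈ padicBall p 1)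
    (hxl : v * x = l) :
    (({10 * x - l, -(10 * x), -(10 * x), -(10 * x)} : Multiset ℚ).map
        fun y => pochDiv (1 + y) M).prod /
      (({(b - 10) * x, (c - 10) * x, (d - 10) * x, (e - 10) * x} : Multiset ℚ).map
        fun z => pochDiv (1 + z) M).prod - 1 ∈ padicBall p 2 := by
  have hmul (w : ℤ) : w * x ∈ padicBall p 1 := mul_mem_padicBall_of_right (intCast_mem _ w) hx
  have h10 : 10 * x ∈ padicBall p 1 := by simpa using hmul 10
  have hsub (w : ℕ) : (w - 10) * x ∈ padicBall p 1 := by simpa using hmul (w - 10)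
  refine prod_pochDiv_one_add_div_sub_one_mem_padicBall hM ?_ ?_ ?_
  · simp only [Multiset.insert_eq_cons, Multiset.mem_cons, Multiset.mem_singleton]
    rintro y (rfl | rfl | rfl | rfl)
    exacts [sub_mem h10 hl, neg_mem h10, neg_mem h10, neg_mem h10]
  · simp only [Multiset.insert_eq_cons, Multiset.mem_cons, Multiset.mem_singleton]
    rintro z (rfl | rfl | rfl | rfl)
    exacts [hsub b, hsub c, hsub d, hsub e]
  · have hsum' : (b + c + d + e + v : ℚ) = 20 := by exact_mod_cast hsum
    simp only [Multiset.insert_eq_cons, Multiset.sum_cons, Multiset.sum_singleton]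
    linear_combination hxl - x * hsum'

theorem mul_mul_mul_sub_mem_padicBall {t A B C R A' B' C' : ℚ}
    (ht : t ∈ padicBall p 1)
    (hA : A ∈ padicBall p 1) (hB : B ∈ padicBall p 1) (hC : C ∈ padicBall p 1)
    (hA' : A' ∈ padicBall p 1) (hB' : B' ∈ padicBall p 1)
    (h₁ : A - A' ∈ padicBall p 3) (h₂ : B - B' ∈ padicBall p 3) (h₃ : C - C' ∈ padicBall p 3)
    (hR : R - 1 ∈ padicBall p 2) :
    t * (A * B * C) * R - t * (A' * B' * C') ∈ padicBall p 6 := by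
  rw [show t * (A * B * C) * R - t * (A' * B' * C') =
    t * (A * B * C * (R - 1) + (A * B * C - A' * B' * C')) by ring]
  have hratio := mul_mem_padicBall (mul_mem_padicBall (mul_mem_padicBall hA hB) hC) hR
  have hprod := mul_mul_sub_mul_mul_mem_padicBall hB hC hA' hB' h₁ h₂ h₃
  norm_num only at hratio hprod
  simpa using mul_mem_padicBall ht (add_mem hratio hprod)

theorem deformedSum_sub_mem_padicBall {j b c d e v : ℕ} (hj : p = 3 * j + 2) (hj0 : 0 < j)
    (hB : ({b, c, d, e, v} : Multiset ℕ) = {2, 3, 4, 5, 6}) (hv : v < p)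
    (hvp : ∀ k < 4 * j + 2, (4 + 3 * k) * v ≠ 20 * p) {K : ℚ} (hK : K ∈ padicIntegral p)
    (hD : ∀ w ∈ padicBall p 1, pochDiv (w - j) (2 * j + 1) - K * w ∈ padicBall p 3) {x : ℚ}
    (hx : v * x = 2 * (p / 3)) :
    deformedSum (2 * j + 1) x - 3 * (2 * (p / 3) - 10 * x) * (K * (p / 3 + (b + c - 10) * x) *
      (K * (p / 3 + (b + d - 10) * x)) * (K * (p / 3 + (c + d - 10) * x))) ∈ padicBall p 6 := by
  have hsum : b + c + d + e + v = 20 := by simpa [add_assoc] using congrArg Multiset.sum hB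
  have hv0 : v ≠ 0 := by
    rintro rfl
    simp [hp.out.ne_zero] at hx
  have hpj : (p : ℚ) = 3 * j + 2 := by exact_mod_cast hj
  have hl : 2 * ((p : ℚ) / 3) = (2 * j + 1 : ℕ) + 1 / 3 := by rw [hpj]; push_cast; ring
  have hthird : (p : ℚ) / 3 ∈ padicBall p 1 := prime_div_three_mem_padicBall (by omega)
  have hl1 : 2 * ((p : ℚ) / 3) ∈ padicBall p 1 :=
    mul_mem_padicBall_of_right (natCast_mem _ 2) hthird
  have hx1 : x ∈ padicBall p 1 := by
    rw [eq_div_of_mul_eq (Nat.cast_ne_zero.2 hv0) ((mul_comm _ _).trans hx)]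
    exact div_mem_padicBall hl1 (natCast_mem_padicUnits_of_lt hv0 hv)
  have hmul (w : ℤ) : w * x ∈ padicBall p 1 := mul_mem_padicBall_of_right (intCast_mem _ w) hx1
  have hpair (w w' : ℕ) : (p : ℚ) / 3 + (w + w' - 10) * x ∈ padicBall p 1 :=
    add_mem hthird (by simpa using hmul (w + w' - 10))
  have hpoch (w w' : ℕ) : pochDiv (2 / 3 + (w + w' - 10) * x) (2 * j + 1) -
      K * (p / 3 + (w + w' - 10) * x) ∈ padicBall p 3 := by
    convert hD _ (hpair w w') using 3
    rw [hpj]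
    ring
  have hKw (w w' : ℕ) := mul_mem_padicBall_of_right hK (hpair w w')
  have hpoch1 (w w' : ℕ) : pochDiv (2 / 3 + (w + w' - 10) * x) (2 * j + 1) ∈ padicBall p 1 := by
    simpa using add_mem (padicBall_antitone (by decide) (hpoch w w')) (hKw w w')
  rw [deformedSum_eq_mul hB (hx.trans hl)
    (fun w _ k hk => by simpa using one_add_mul_add_ne_zero hx1 (w - 10) (k := k) (by omega))
    (fun k hk h => hvp k (by omega) (by
      have : ((4 + 3 * k) * v : ℚ) = 20 * p := by linear_combination 3 * v * h + 30 * hx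
      exact_mod_cast this)), ← hl]
  exact mul_mul_mul_sub_mem_padicBall
    (mul_mem_padicBall_of_right (natCast_mem _ 3) (sub_mem hl1 (by simpa using hmul 10)))
    (hpoch1 b c) (hpoch1 b d) (hpoch1 c d) (hKw b c) (hKw b d) (hpoch b c) (hpoch b d) (hpoch c d)
    (prod_pochDiv_deformed_div_sub_one_mem_padicBall (by omega) hsum hx1 hl1 hx)

theorem deformedSum_eq_zero {M : ℕ} (hM : M < p) {y : ℚ} (hy : y ∈ padicBall p 1)
    (hyM : 10 * y = M + 1 / 3) : deformedSum M y = 0 := by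
  have ha : 1 / 3 - 10 * y = -(M : ℚ) := by rw [hyM]; ring
  have hzero : veryWellPoisedSum (-(M : ℚ))
      (({2, 3, 4, 5, 6} : Multiset ℕ).map fun b : ℕ => 1 / 3 - b * y) (M + 1) = 0 := by
    refine veryWellPoisedSum_neg_natCast (by rw [Multiset.card_map]; decide) fun b hb i hi => ?_
    obtain ⟨w, -, rfl⟩ := Multiset.mem_map.1 hb
    convert one_add_mul_add_ne_zero hy (w - 10) (k := i) (by omega) using 1
    push_cast
    linear_combination -ha
  rw [deformedSum, ha, hzero, mul_zero, zero_mul]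

theorem fortyTwo_mem_padicUnits (h11 : 11 ≤ p) : (42 : ℚ) ∈ padicUnits p := by
  have h6 : ((6 : ℕ) : ℚ) ∈ padicUnits p := natCast_mem_padicUnits_of_lt (by decide) (by omega)
  have h7 : ((7 : ℕ) : ℚ) ∈ padicUnits p := natCast_mem_padicUnits_of_lt (by decide) (by omega)
  convert mul_mem h6 h7 using 1
  norm_num

theorem deformedSum_zero_sub_mem_padicBall (h3 : p % 3 = 2) (h11 : 11 ≤ p) {M : ℕ} (hM : M < p)
    {y : ℚ} (hy : y ∈ padicBall p 1) :
    deformedSum M 0 - (-7 * deformedSum M (y / 2) + 243 * deformedSum M (y / 3) -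
      1792 * deformedSum M (y / 4) + 4375 * deformedSum M (y / 5) - 3402 * deformedSum M (y / 6) +
        625 * deformedSum M (y / 10)) / 42 ∈ padicBall p 6 := by
  have h42 := fortyTwo_mem_padicUnits h11
  have hc (i : Fin 6) : (![-7, 243, -1792, 4375, -3402, 625] i : ℤ) / (42 : ℚ) ∈ padicIntegral p :=
    div_mem_padicBall (intCast_mem (padicIntegral p) _) h42
  have hu (i : Fin 6) : ((![2, 3, 4, 5, 6, 10] i : ℕ) : ℚ)⁻¹ ∈ padicIntegral p :=
    mem_padicIntegral_of_mem_padicUnits <| inv_mem_padicUnits <|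
      natCast_mem_padicUnits_of_lt (by revert i; decide) (by fin_cases i <;> simp <;> omega)
  -- the weights of Lagrange interpolation at `0` from the nodes `1 / 2, …, 1 / 6, 1 / 10`
  convert sub_sum_mul_mem_padicBall (n := 6) (deformedSum_mem_polyApprox h3 hM) hc hu
    (fun d hd => by interval_cases d <;> simp [Fin.sum_univ_six] <;> norm_num) hy using 2
  · norm_num
  rw [Fin.sum_univ_six]
  simp only [Matrix.cons_val, Matrix.cons_val_zero, Matrix.cons_val_one, Int.cast_neg,
    Int.cast_ofNat, Nat.cast_ofNat, inv_mul_eq_div]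
  ring

theorem deformedSum_two_mul_div_sub_mem_padicBall {j : ℕ} (hj : p = 3 * j + 2) (h11 : 11 ≤ p)
    {K : ℚ} (hK : K ∈ padicIntegral p)
    (hD : ∀ w ∈ padicBall p 1, pochDiv (w - j) (2 * j + 1) - K * w ∈ padicBall p 3)
    {b c d e v : ℕ} (hB : ({b, c, d, e, v} : Multiset ℕ) = {2, 3, 4, 5, 6}) :
    deformedSum (2 * j + 1) (2 * (p / 3) / v) - 6 * (1 - 10 / v) * (1 + 2 * (b + c - 10) / v) *
      (1 + 2 * (b + d - 10) / v) * (1 + 2 * (c + d - 10) / v) * (K ^ 3 * (p / 3) ^ 4) ∈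
        padicBall p 6 := by
  have hmem : v ∈ ({2, 3, 4, 5, 6} : Multiset ℕ) := hB ▸ by simp
  have hv : 2 ≤ v ∧ v ≤ 6 := by
    simp only [Multiset.insert_eq_cons, Multiset.mem_cons, Multiset.mem_singleton] at hmem
    omega
  have hne : ∀ k < 4 * j + 2, (4 + 3 * k) * v ≠ 20 * p := fun k hk => by
    obtain ⟨h2, h6⟩ := hv
    interval_cases v <;> omega
  have hv0 : (v : ℚ) ≠ 0 := Nat.cast_ne_zero.2 (by omega)
  convert deformedSum_sub_mem_padicBall hj (by omega) hB (by omega) hne hK hD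
    (mul_div_cancel₀ _ hv0) using 1
  ring

theorem deformedSum_zero_sub_thirty_mul_mem_padicBall {j : ℕ} (hj : p = 3 * j + 2) (h11 : 11 ≤ p)
    {K : ℚ} (hK : K ∈ padicIntegral p)
    (hD : ∀ w ∈ padicBall p 1, pochDiv (w - j) (2 * j + 1) - K * w ∈ padicBall p 3) :
    deformedSum (2 * j + 1) 0 - 30 * (K ^ 3 * (p / 3) ^ 4) ∈ padicBall p 6 := by
  have hpj : (p : ℚ) = 3 * j + 2 := by exact_mod_cast hj
  have h2t : 2 * ((p : ℚ) / 3) ∈ padicBall p 1 :=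
    mul_mem_padicBall_of_right (natCast_mem _ 2) (prime_div_three_mem_padicBall (by omega))
  have hinterp := deformedSum_zero_sub_mem_padicBall (M := 2 * j + 1) (by omega) h11 (by omega) h2t
  have hzero : deformedSum (2 * j + 1) (2 * (p / 3) / 10) = 0 :=
    deformedSum_eq_zero (p := p) (by omega)
      (div_mem_padicBall h2t (natCast_mem_padicUnits_of_lt (n := 10) (by decide) (by omega)))
      (by push_cast; rw [hpj]; ring)
  have hnode {b c d e v : ℕ} (hB : ({b, c, d, e, v} : Multiset ℕ) = {2, 3, 4, 5, 6}) :=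
    deformedSum_two_mul_div_sub_mem_padicBall hj h11 hK hD hB
  have h₂ := hnode (b := 3) (c := 6) (d := 4) (e := 5) (v := 2) (by decide)
  have h₃ := hnode (b := 4) (c := 5) (d := 6) (e := 2) (v := 3) (by decide)
  have h₄ := hnode (b := 2) (c := 6) (d := 3) (e := 5) (v := 4) (by decide)
  have h₅ := hnode (b := 3) (c := 4) (d := 6) (e := 2) (v := 5) (by decide)
  have h₆ := hnode (b := 2) (c := 5) (d := 3) (e := 4) (v := 6) (by decide)
  have hmul (w : ℤ) {z : ℚ} (hz : z ∈ padicBall p 6) : w * z ∈ padicBall p 6 :=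
    mul_mem_padicBall_of_right (intCast_mem _ w) hz
  convert add_mem hinterp (div_mem_padicBall (add_mem (add_mem (add_mem (add_mem
    (hmul (-7) h₂) (hmul 243 h₃)) (hmul (-1792) h₄)) (hmul 4375 h₅)) (hmul (-3402) h₆))
      (fortyTwo_mem_padicUnits h11)) using 1
  rw [hzero]
  push_cast
  ring

theorem sum_range_succ_sub_mem_padicBall_of_eleven_le {j : ℕ} (hj : p = 3 * j + 2) (h11 : 11 ≤ p) :
    ∑ k ∈ range (2 * j + 1 + 1), (6 * k + 1) * pochDiv (1 / 3) k ^ 6 -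
      10 * p * pochDiv (2 / 3) (2 * j + 1) ^ 3 ∈ padicBall p 6 := by
  obtain ⟨K, hK, hD⟩ := exists_pochDiv_sub_natCast_sub_mem_padicBall (p := p) (j := j) (by omega)
  have ht : (p : ℚ) / 3 ∈ padicBall p 1 := prime_div_three_mem_padicBall (by omega)
  have hp1 : (p : ℚ) ∈ padicBall p 1 := by simpa using prime_pow_mem_padicBall (p := p) 1
  have hD' : pochDiv (2 / 3) (2 * j + 1) - K * (p / 3) ∈ padicBall p 3 := by
    convert hD _ ht using 3
    rw [show (p : ℚ) = 3 * j + 2 by exact_mod_cast hj]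
    ring
  have hKt := mul_mem_padicBall_of_right hK ht
  have hD1 : pochDiv (2 / 3) (2 * j + 1) ∈ padicBall p 1 := by
    simpa using add_mem (padicBall_antitone (by decide) hD') hKt
  have hcube := mul_mem_padicBall (mul_mem_padicBall_of_right (natCast_mem _ 10) hp1)
    (mul_mul_sub_mul_mul_mem_padicBall hD1 hD1 hKt hKt hD' hD' hD')
  rw [show (1 : ℤ) + (2 * 1 + 3) = 6 by rfl] at hcube
  rw [← deformedSum_zero]
  convert sub_mem (deformedSum_zero_sub_thirty_mul_mem_padicBall hj h11 hK hD) hcube using 1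
  push_cast
  ring

end ExponentOne

theorem sum_range_four_sub_mem_padicBall [Fact (Nat.Prime 5)] :
    ∑ k ∈ range (3 + 1), (6 * k + 1) * pochDiv (1 / 3) k ^ 6 -
      10 * (5 : ℕ) * pochDiv (2 / 3) 3 ^ 3 ∈ padicBall 5 6 := by
  have hunit : ((3 ^ 24 : ℕ) : ℚ) ∈ padicUnits 5 := natCast_mem_padicUnits (by norm_num)
  convert mul_mem_padicBall_of_left (prime_pow_mem_padicBall (p := 5) 6)
    (div_mem_padicBall (intCast_mem (padicIntegral 5) (-90552608)) hunit) using 1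
  · norm_num
  · norm_num [sum_range_succ, prod_range_succ, pochDiv, poch, Nat.factorial]

theorem mod_three_eq_two_and_odd_of_pow {n s : ℕ} (hs : 0 < s) (h : n ^ s % 3 = 2) :
    n % 3 = 2 ∧ Odd s := by
  have hn : n % 3 < 3 := Nat.mod_lt _ (by decide)
  rw [Nat.pow_mod] at h
  interval_cases n % 3
  · rw [zero_pow hs.ne'] at h
    contradiction
  · rw [one_pow] at h
    contradiction
  · refine ⟨rfl, Nat.not_even_iff_odd.1 ?_⟩
    rintro ⟨r, rfl⟩
    rw [← two_mul, pow_mul, Nat.pow_mod] at h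
    norm_num at h

section Conclusion

variable {p : ℕ} [hp : Fact p.Prime]

theorem sum_range_succ_sub_mem_padicBall (h3 : p % 3 = 2) (h5 : 5 ≤ p) {M : ℕ}
    (hM : 3 * M + 1 = 2 * p) :
    ∑ k ∈ range (M + 1), (6 * k + 1) * pochDiv (1 / 3) k ^ 6 -
      10 * p * pochDiv (2 / 3) M ^ 3 ∈ padicBall p 6 := by
  obtain h11 | h11 := le_or_gt 11 p
  · obtain rfl : M = 2 * (p / 3) + 1 := by omega
    exact sum_range_succ_sub_mem_padicBall_of_eleven_le (by omega) h11
  · obtain rfl : p = 5 := by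
      have := hp.out.eq_one_or_self_of_dvd 2
      omega
    obtain rfl : M = 3 := by omega
    exact sum_range_four_sub_mem_padicBall

theorem sum_range_sub_sum_range_succ_mem_padicBall (h3 : p % 3 = 2) {M : ℕ}
    (hM : 3 * M + 1 = 2 * p) :
    ∑ k ∈ range p, (6 * k + 1) * pochDiv (1 / 3) k ^ 6 -
      ∑ k ∈ range (M + 1), (6 * k + 1) * pochDiv (1 / 3) k ^ 6 ∈ padicBall p 6 := by
  have hMp : M + 1 ≤ p := by have := hp.out.two_le; omega
  rw [← sum_Ico_eq_sub _ hMp]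
  refine sum_mem fun k hk => mul_mem_padicBall_of_right ?_ ?_
  · exact_mod_cast natCast_mem (padicIntegral p) (6 * k + 1)
  · obtain ⟨hMk, hkp⟩ := mem_Ico.1 hk
    exact pow_mem_padicBall (pochDiv_one_third_mem_padicBall h3 (by omega) hkp) 6

theorem ten_mul_pow_mul_pochDiv_two_thirds_mem_padicBall (h3 : p % 3 = 2) {s M : ℕ} (hs : 3 ≤ s)
    (hM : 3 * M + 1 = 2 * p ^ s) :
    10 * (p : ℚ) ^ s * pochDiv (2 / 3) M ^ 3 ∈ padicBall p (s + 5) := by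
  have hdvd : p ^ (2 * 2 - 1) ∣ 3 * M + 1 := hM ▸ (pow_dvd_pow p hs).mul_left 2
  exact padicBall_antitone (by push_cast; omega) (mul_mem_padicBall
    (mul_mem_padicBall_of_right (natCast_mem _ 10) (prime_pow_mem_padicBall s))
    (pow_mem_padicBall (pochDiv_two_thirds_mem_padicBall h3 hdvd) 3))

theorem sum_pochDiv_pow_six_sub_mem_padicBall (h3 : p % 3 = 2) (h5 : 5 ≤ p) {s M m : ℕ}
    (hs : Odd s) (hM : 3 * M + 1 = 2 * p ^ s) (hm : m = M ∨ m + 1 = p ^ s) :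
    ∑ k ∈ range (m + 1), (6 * k + 1) * pochDiv (1 / 3) k ^ 6 -
      10 * (p : ℚ) ^ s * pochDiv (2 / 3) M ^ 3 ∈ padicBall p (s + 5) := by
  obtain rfl | hs3 : s = 1 ∨ 3 ≤ s := by obtain ⟨r, rfl⟩ := hs; omega
  · rw [pow_one] at hM hm ⊢
    have hshort := sum_range_succ_sub_mem_padicBall h3 h5 hM
    obtain rfl | hm := hm
    · exact hshort
    · rw [hm, ← sub_add_sub_cancel]
      exact add_mem (sum_range_sub_sum_range_succ_mem_padicBall h3 hM) hshort
  · refine sub_mem ?_ (ten_mul_pow_mul_pochDiv_two_thirds_mem_padicBall h3 hs3 hM)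
    obtain rfl | hm := hm
    · exact sum_range_succ_pochDiv_pow_six_mem_padicBall h3 h5 hs3 hs hM
    · exact hm ▸ sum_range_pow_pochDiv_pow_six_mem_padicBall h3 h5 hs3 hs

end Conclusion

theorem stmt5 (p : ℕ) (hp : p.Prime) (hodd : Odd p) (s : ℕ) (hs : 0 < s)
    (hmod : p ^ s % 3 = 2)
    (m : ℕ) (hm : m = (2 * p ^ s - 1) / 3 ∨ m = p ^ s - 1) :
    pcong p (s + 5)
      (∑ k ∈ Finset.range (m + 1),
        (6 * k + 1) * poch (1 / 3) k ^ 6 / (k.factorial : ℚ) ^ 6)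
      (10 * (p : ℚ) ^ s *
        (poch (2 / 3) ((2 * p ^ s - 1) / 3) ^ 3 / poch 1 ((2 * p ^ s - 1) / 3) ^ 3)) := by
  have : Fact p.Prime := ⟨hp⟩
  obtain ⟨h3, hs_odd⟩ := mod_three_eq_two_and_odd_of_pow hs hmod
  have h5 : 5 ≤ p := by
    obtain ⟨t, rfl⟩ := hodd
    omega
  refine pcong_of_sub_mem_padicBall ?_
  have hcong := sum_pochDiv_pow_six_sub_mem_padicBall h3 h5 hs_odd
    (M := (2 * p ^ s - 1) / 3) (m := m) (by omega) (by omega)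
  simpa only [pochDiv, div_pow, mul_div_assoc, poch_one, Nat.cast_add, Nat.cast_ofNat] using hcong
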